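/- For every integer n of the form n = 3^{k₁} + 3^{k₂} + 3^{k₃} with integers k₁ > k₂ > k₃ ≥ 0, there exist fields F ⊆ E of characteristic 0 with [E : F] = n such that no nonzero element δ ∈ E satisfies Tr_{E/F}(δ) = 0 and Tr_{E/F}(δ³) = 0. (That is, Hermite's theorem fails for every such n.) -/

import Mathlib

/-!
Adjoining a cube root of a transcendental `s` to a factor `K[X]/(f)` of an étale algebra replaces
`f` by `f ^ 3 - s`, which reduces to `f ^ 3` at `s = 0`: a descent on `s`-adic valuations trades a
factor `3` in the weight of the trace of that factor for a factor `3` in its degree, and keeps the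
weighted forms `∑ w_i Tr (a_i)` and `∑ w_i Tr (a_i ^ 3)` without a common zero. Starting from copies
of `ℚ` with weights `3 ^ k_i` one reaches factors `K[X]/(f_i)` of degrees `3 ^ k_i` with weights
`1`, and the same descent applies to the irreducible polynomial `∏ f_i - s`, of degree `∑ 3 ^ k_i`.

It remains to see that `∑ 3 ^ k_i x_i = ∑ 3 ^ k_i x_i ^ 3 = 0` has no nontrivial rational solution.
Eliminating a variable and comparing `3`-adic valuations leads to
`X ^ 3 + Y ^ 3 = 9 ^ b (9 ^ c X + Y) ^ 3` with `b, c ≥ 1` and `X`, `Y` coprime. According to `b`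
modulo `3` this gives a point on `X ^ 3 + Y ^ 3 = m W ^ 3` with `m = 1`, `9` or `3`. For `m = 1` it
is Fermat's equation, for `m = 3` an infinite descent in the Eisenstein integers applies. For
`m = 9` and `b = 3 d + 1` the same descent shows that the point is divisible by `3 ^ (2 d)` on the
elliptic curve. If a prime `p` divides `X`, it divides `9 ^ b - 1`, and modulo `p` the point has
order `3`, so that the curve over `𝔽_p` has a point of order `3 ^ (2 d + 1)`, and two independent
ones when `𝔽_p` contains the cube roots of unity. For `d ≥ 1` this is too large for `p`, hence
`X = ±1`, while for `d = 0` one has `X ∣ 8`. In both cases `X` is a cube, and Fermat's equation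
forces `Y = 2 X`, which is absurd.
-/

/-! ### The cubic `x ^ 3 + y ^ 3 = 9 * w ^ 3` as an elliptic curve -/

/-- The Weierstrass model `v ^ 2 - 3 * v = u ^ 3 - 3` of the cubic `x ^ 3 + y ^ 3 = 9 * w ^ 3`,
obtained from the coordinates `u = 3 * w / (x + y)` and `v = 3 * x / (x + y)`. -/
def cubicCurve (F : Type*) [CommRing F] : WeierstrassCurve.Affine F :=
  ⟨0, 0, -3, 0, -3⟩

/-- The binary cubic form describing multiplication by three on `x ^ 3 + y ^ 3 = c * w ^ 3`: the
first two coordinates of the triple of `(x : y : w)` are `tripleForm (x ^ 3) (y ^ 3)` and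
`tripleForm (y ^ 3) (x ^ 3)`. -/
def tripleForm {R : Type*} [CommRing R] (a b : R) : R :=
  a ^ 3 + 6 * a ^ 2 * b + 3 * a * b ^ 2 - b ^ 3

lemma tripleForm_add_tripleForm {R : Type*} [CommRing R] {x y w : R}
    (h : x ^ 3 + y ^ 3 = 9 * w ^ 3) :
    tripleForm (x ^ 3) (y ^ 3) + tripleForm (y ^ 3) (x ^ 3) = 81 * (x * y * w) ^ 3 := by
  simp only [tripleForm]
  linear_combination 9 * x ^ 3 * y ^ 3 * h

section CubicPoint

variable {F : Type*} [Field F]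

lemma cubicCurve_equation_iff {u v : F} :
    (cubicCurve F).Equation u v ↔ v ^ 2 - 3 * v + 3 = u ^ 3 := by
  rw [WeierstrassCurve.Affine.equation_iff]
  simp only [cubicCurve]
  grind

lemma cubicCurve_nonsingular_iff (h3 : (3 : F) ≠ 0) {u v : F} :
    (cubicCurve F).Nonsingular u v ↔ v ^ 2 - 3 * v + 3 = u ^ 3 := by
  have hΔ : (cubicCurve F).Δ = -3 ^ 5 := by
    simp only [cubicCurve, WeierstrassCurve.Δ, WeierstrassCurve.b₂, WeierstrassCurve.b₄,
      WeierstrassCurve.b₆, WeierstrassCurve.b₈]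
    ring
  have hΔ_ne : (cubicCurve F).Δ ≠ 0 := hΔ ▸ neg_ne_zero.2 (pow_ne_zero _ h3)
  rw [← (cubicCurve F).equation_iff_nonsingular_of_Δ_ne_zero hΔ_ne, cubicCurve_equation_iff]

lemma cubicCurve_negY (u v : F) : (cubicCurve F).negY u v = 3 - v := by
  simp only [WeierstrassCurve.Affine.negY, cubicCurve]
  ring

lemma cubicCurve_addX (u₁ u₂ ℓ : F) : (cubicCurve F).addX u₁ u₂ ℓ = ℓ ^ 2 - u₁ - u₂ := by
  simp only [WeierstrassCurve.Affine.addX, cubicCurve]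
  ring

lemma cubicCurve_addY (u₁ u₂ v₁ ℓ : F) :
    (cubicCurve F).addY u₁ u₂ v₁ ℓ = 3 - v₁ - ℓ * (ℓ ^ 2 - 2 * u₁ - u₂) := by
  simp only [WeierstrassCurve.Affine.addY, WeierstrassCurve.Affine.negAddY, cubicCurve_negY,
    cubicCurve_addX]
  ring

lemma doubled_add_doubled {R : Type*} [CommRing R] (x y : R) :
    -y * (2 * x ^ 3 + y ^ 3) + x * (x ^ 3 + 2 * y ^ 3) = (x - y) ^ 3 * (x + y) := by
  ring

lemma doubled_cube_add_doubled_cube {R : Type*} [CommRing R] {x y w c : R}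
    (h : x ^ 3 + y ^ 3 = c * w ^ 3) :
    (-y * (2 * x ^ 3 + y ^ 3)) ^ 3 + (x * (x ^ 3 + 2 * y ^ 3)) ^ 3 =
      c * (w * (x ^ 3 - y ^ 3)) ^ 3 := by
  linear_combination (x ^ 3 - y ^ 3) ^ 3 * h

variable {x y w : F}

/-- The point of `cubicCurve F` corresponding to a solution of `x ^ 3 + y ^ 3 = 9 * w ^ 3`. The
solutions with `x + y = 0`, hence `w = 0`, form the point at infinity and are left out. -/
def cubicPoint (h3 : (3 : F) ≠ 0) (hs : x + y ≠ 0) (h : x ^ 3 + y ^ 3 = 9 * w ^ 3) :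
    (cubicCurve F).Point :=
  .some (3 * w / (x + y)) (3 * x / (x + y)) <| (cubicCurve_nonsingular_iff h3).2 <| by
    field_simp
    linear_combination h

lemma doubled_div_sub_div (hs : x + y ≠ 0) (hxy : x - y ≠ 0) :
    3 * (w * (x ^ 3 - y ^ 3)) / ((x - y) ^ 3 * (x + y)) - 3 * w / (x + y) =
      3 * (3 * w * x * y) / ((x - y) ^ 2 * (x + y)) := by
  field_simp
  ring

lemma doubled_div_ne_div (h3 : (3 : F) ≠ 0) (hs : x + y ≠ 0) (hxy : x - y ≠ 0) (hx : x ≠ 0)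
    (hy : y ≠ 0) (hw : w ≠ 0) :
    3 * (w * (x ^ 3 - y ^ 3)) / ((x - y) ^ 3 * (x + y)) ≠ 3 * w / (x + y) := by
  rw [← sub_ne_zero, doubled_div_sub_div hs hxy]
  positivity

variable [DecidableEq F]

open WeierstrassCurve.Affine

lemma two_nsmul_cubicPoint_self (h3 : (3 : F) ≠ 0) (hs : x + x ≠ 0)
    (h : x ^ 3 + x ^ 3 = 9 * w ^ 3) : 2 • cubicPoint h3 hs h = 0 := by
  rw [two_nsmul]
  refine Point.add_self_of_Y_eq ?_
  rw [cubicCurve_negY, eq_sub_iff_add_eq, ← add_div, ← mul_add, mul_div_cancel_right₀ _ hs]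

lemma two_nsmul_cubicPoint (h3 : (3 : F) ≠ 0) (hs : x + y ≠ 0) (hxy : x - y ≠ 0)
    (h : x ^ 3 + y ^ 3 = 9 * w ^ 3)
    (hs' : -y * (2 * x ^ 3 + y ^ 3) + x * (x ^ 3 + 2 * y ^ 3) ≠ 0)
    (h' : (-y * (2 * x ^ 3 + y ^ 3)) ^ 3 + (x * (x ^ 3 + 2 * y ^ 3)) ^ 3 =
      9 * (w * (x ^ 3 - y ^ 3)) ^ 3) :
    2 • cubicPoint h3 hs h = cubicPoint h3 hs' h' := by
  have hneg : 3 * x / (x + y) - (cubicCurve F).negY (3 * w / (x + y)) (3 * x / (x + y)) =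
      3 * (x - y) / (x + y) := by
    rw [cubicCurve_negY]
    field_simp
    ring
  have hneg' : 3 * x / (x + y) ≠ (cubicCurve F).negY (3 * w / (x + y)) (3 * x / (x + y)) := by
    rw [← sub_ne_zero, hneg]
    exact div_ne_zero (mul_ne_zero h3 hxy) hs
  have hslope : (cubicCurve F).slope (3 * w / (x + y)) (3 * w / (x + y)) (3 * x / (x + y))
      (3 * x / (x + y)) = 9 * w ^ 2 / ((x + y) * (x - y)) := by
    rw [slope_of_Y_ne rfl hneg', hneg]
    simp only [cubicCurve]
    field_simp
    ring
  rw [two_nsmul, cubicPoint, Point.add_self_of_Y_ne hneg', cubicPoint, Point.some.injEq, hslope,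
    doubled_add_doubled, cubicCurve_addX, cubicCurve_addY]
  constructor
  · field_simp
    linear_combination -9 * w * (x - y) * h
  · field_simp
    linear_combination (81 * w ^ 3 - 9 * (x - y) ^ 2 * (x + y) + 9 * (x ^ 3 + y ^ 3)) * h

lemma cubicCurve_slope_doubled (h3 : (3 : F) ≠ 0) (hs : x + y ≠ 0) (hxy : x - y ≠ 0) (hx : x ≠ 0)
    (hy : y ≠ 0) (hw : w ≠ 0) :
    (cubicCurve F).slope (3 * (w * (x ^ 3 - y ^ 3)) / ((x - y) ^ 3 * (x + y))) (3 * w / (x + y))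
      (3 * (-y * (2 * x ^ 3 + y ^ 3)) / ((x - y) ^ 3 * (x + y))) (3 * x / (x + y)) =
      -(x ^ 4 - x ^ 3 * y + 3 * x ^ 2 * y ^ 2 - x * y ^ 3 + y ^ 4) / (3 * w * x * y * (x - y)) := by
  rw [slope_of_X_ne (doubled_div_ne_div h3 hs hxy hx hy hw), doubled_div_sub_div hs hxy]
  field_simp
  ring

lemma three_nsmul_cubicPoint_of_sub_ne_zero (h3 : (3 : F) ≠ 0) (hs : x + y ≠ 0) (hxy : x - y ≠ 0)
    (h : x ^ 3 + y ^ 3 = 9 * w ^ 3)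
    (hs' : tripleForm (x ^ 3) (y ^ 3) + tripleForm (y ^ 3) (x ^ 3) ≠ 0)
    (h' : tripleForm (x ^ 3) (y ^ 3) ^ 3 + tripleForm (y ^ 3) (x ^ 3) ^ 3 =
      9 * (3 * (x * y * w * (x ^ 6 + x ^ 3 * y ^ 3 + y ^ 6))) ^ 3) :
    3 • cubicPoint h3 hs h = cubicPoint h3 hs' h' := by
  have hsum := tripleForm_add_tripleForm h
  rw [hsum] at hs'
  have hx : x ≠ 0 := by grind
  have hy : y ≠ 0 := by grind
  have hw : w ≠ 0 := by grind
  have hs₂ : -y * (2 * x ^ 3 + y ^ 3) + x * (x ^ 3 + 2 * y ^ 3) ≠ 0 :=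
    doubled_add_doubled x y ▸ mul_ne_zero (pow_ne_zero 3 hxy) hs
  rw [succ_nsmul, two_nsmul_cubicPoint h3 hs hxy h hs₂ (doubled_cube_add_doubled_cube h),
    cubicPoint, cubicPoint]
  simp_rw [doubled_add_doubled]
  rw [Point.add_of_X_ne (doubled_div_ne_div h3 hs hxy hx hy hw), cubicPoint, Point.some.injEq,
    cubicCurve_slope_doubled h3 hs hxy hx hy hw, cubicCurve_addX, cubicCurve_addY, hsum,
    tripleForm, show (81 : F) = 3 ^ 4 by norm_num]
  constructor
  · field_simp
    linear_combination 3 * x ^ 2 * y ^ 2 * (x ^ 3 - y ^ 3 + (x - y) ^ 3) * h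
  · field_simp
    linear_combination (3 * (x ^ 4 - x ^ 3 * y + 3 * x ^ 2 * y ^ 2 - x * y ^ 3 + y ^ 4) *
      x ^ 2 * y ^ 2 * (2 * (x ^ 3 - y ^ 3) + (x - y) ^ 3) -
      9 * x ^ 3 * y ^ 3 * (x - y) * ((x - y) ^ 3 * (x + y) + y * (2 * x ^ 3 + y ^ 3))) * h

lemma three_nsmul_cubicPoint (h3 : (3 : F) ≠ 0) (hs : x + y ≠ 0) (h : x ^ 3 + y ^ 3 = 9 * w ^ 3)
    (hs' : tripleForm (x ^ 3) (y ^ 3) + tripleForm (y ^ 3) (x ^ 3) ≠ 0)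
    (h' : tripleForm (x ^ 3) (y ^ 3) ^ 3 + tripleForm (y ^ 3) (x ^ 3) ^ 3 =
      9 * (3 * (x * y * w * (x ^ 6 + x ^ 3 * y ^ 3 + y ^ 6))) ^ 3) :
    3 • cubicPoint h3 hs h = cubicPoint h3 hs' h' := by
  by_cases hxy : x - y = 0
  · obtain rfl : x = y := sub_eq_zero.1 hxy
    have hx : x ≠ 0 := by grind
    have h2 : (2 : F) ≠ 0 := by grind
    have hsum' : tripleForm (x ^ 3) (x ^ 3) + tripleForm (x ^ 3) (x ^ 3) = 3 ^ 2 * (2 * x ^ 9) := by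
      rw [tripleForm]; ring
    rw [succ_nsmul, two_nsmul_cubicPoint_self, zero_add, cubicPoint, cubicPoint, Point.some.injEq,
      hsum', tripleForm, ← two_mul]
    constructor <;> field_simp <;> ring
  · exact three_nsmul_cubicPoint_of_sub_ne_zero h3 hs hxy h hs' h'

lemma three_nsmul_cubicPoint_of_eq_zero (h3 : (3 : F) ≠ 0) (hs : x + y ≠ 0)
    (h : x ^ 3 + y ^ 3 = 9 * w ^ 3) (hx : x = 0) : 3 • cubicPoint h3 hs h = 0 := by
  subst hx
  have hy : y ≠ 0 := by simpa using hs
  rw [succ_nsmul, two_nsmul_cubicPoint h3 hs (by simpa) h (by simpa)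
    (doubled_cube_add_doubled_cube h), ← eq_neg_iff_add_eq_zero, cubicPoint, cubicPoint,
    Point.neg_some, Point.some.injEq, cubicCurve_negY]
  constructor <;> field_simp <;> ring

end CubicPoint

section FinitePoints

open WeierstrassCurve.Affine

instance finite_affine_point {F : Type*} [Field F] [Finite F] (W : WeierstrassCurve.Affine F) :
    Finite W.Point :=
  W.nonsingularPointEquiv.finite_iff.2 (inferInstanceAs (Finite (Option _)))

lemma natCard_point_le {F : Type*} [Field F] [Finite F]
    (W : WeierstrassCurve.Affine F) : Nat.card W.Point ≤ 2 * (Nat.card F + 1) := by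
  classical
  have := Fintype.ofFinite W.Point
  have := Fintype.ofFinite F
  have maps : ∀ P ∈ (Finset.univ : Finset W.Point),
      P.xRep ∈ insert ![1, 0] (Finset.univ.image fun x : F ↦ ![x, 1]) := by
    rintro (_ | ⟨x, y, h⟩) -
    · exact Finset.mem_insert_self _ _
    · exact Finset.mem_insert_of_mem (Finset.mem_image_of_mem _ (Finset.mem_univ x))
  have fiber : ∀ r ∈ insert ![1, 0] (Finset.univ.image fun x : F ↦ ![x, 1]),
      (Finset.univ.filter fun P : W.Point ↦ P.xRep = r).card ≤ 2 := by
    rintro r -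
    rcases (Finset.univ.filter fun P : W.Point ↦ P.xRep = r).eq_empty_or_nonempty with h | ⟨P, hP⟩
    · simp [h]
    · refine (Finset.card_le_card fun Q hQ ↦ ?_).trans (Finset.card_le_two (a := P) (b := -P))
      rw [Finset.mem_filter_univ] at hP hQ
      simpa using Point.eq_or_eq_neg_of_xRep_eq_xRep (hQ.trans hP.symm)
  calc Nat.card W.Point = (Finset.univ : Finset W.Point).card := by simp
    _ ≤ 2 * _ := Finset.card_le_mul_card_image_of_maps_to maps 2 fiber
    _ ≤ 2 * (Nat.card F + 1) := by
      grw [Finset.card_insert_le, Finset.card_image_le, Finset.card_univ, Nat.card_eq_fintype_card]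

lemma natCard_cubicCurve_point {F : Type*} [Field F] [Finite F] (h3 : (3 : F) ≠ 0)
    (hcube : Function.Bijective fun u : F ↦ u ^ 3) :
    Nat.card (cubicCurve F).Point = Nat.card F + 1 := by
  let yCoord : (cubicCurve F).Point → Option F
    | .zero => none
    | .some _ v _ => some v
  have hy : Function.Bijective yCoord := by
    refine ⟨?_, ?_⟩
    · rintro (_ | ⟨u, v, h⟩) (_ | ⟨u', v', h'⟩) hv
      · rfl
      · cases hv
      · cases hv
      · obtain rfl : v = v' := Option.some_injective _ hv
        rw [cubicCurve_nonsingular_iff h3] at h h'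
        obtain rfl : u = u' := hcube.1 (h.symm.trans h')
        rfl
    · rintro (_ | v)
      · exact ⟨.zero, rfl⟩
      · obtain ⟨u, hu⟩ := hcube.2 (v ^ 2 - 3 * v + 3)
        exact ⟨.some u v ((cubicCurve_nonsingular_iff h3).2 hu.symm), rfl⟩
  rw [Nat.card_congr (Equiv.ofBijective yCoord hy), Finite.card_option]

end FinitePoints

/-! ### Descent in the Eisenstein integers -/

/-- The ring `ℤ[ω]` of Eisenstein integers, `⟨a, b⟩` standing for `a + b * ω` with
`ω ^ 2 = -1 - ω`. It is used for the factorization of `x ^ 2 - x * y + y ^ 2`. -/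
abbrev EisensteinInt : Type := QuadraticAlgebra ℤ (-1) (-1)

namespace EisensteinInt

lemma norm_eq (z : EisensteinInt) : z.norm = z.re ^ 2 - z.re * z.im + z.im ^ 2 := by
  rw [QuadraticAlgebra.norm_def]
  ring

lemma norm_nonneg (z : EisensteinInt) : 0 ≤ z.norm := by
  rw [norm_eq]
  nlinarith [sq_nonneg (z.re - z.im), sq_nonneg z.re, sq_nonneg z.im]

lemma norm_pos {z : EisensteinInt} (hz : z ≠ 0) : 0 < z.norm := by
  refine (norm_nonneg z).lt_of_ne' fun h ↦ hz ?_
  rw [norm_eq] at h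
  ext
  · exact pow_eq_zero_iff two_ne_zero |>.1 <| by nlinarith [sq_nonneg (2 * z.im - z.re)]
  · exact pow_eq_zero_iff two_ne_zero |>.1 <| by nlinarith [sq_nonneg (2 * z.re - z.im)]

lemma exists_abs_two_mul_sub_mul_le (m : ℤ) {N : ℤ} (hN : 0 < N) :
    ∃ t, |2 * (m - N * t)| ≤ N := by
  refine ⟨(2 * m + N) / (2 * N), abs_le.2 ?_⟩
  have nonneg := Int.emod_nonneg (2 * m + N) (by positivity : 2 * N ≠ 0)
  have lt := Int.emod_lt_of_pos (2 * m + N) (by positivity : 0 < 2 * N)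
  have div_add_mod := Int.mul_ediv_add_emod (2 * m + N) (2 * N)
  constructor <;> linarith

lemma exists_norm_sub_mul_lt (x : EisensteinInt) {y : EisensteinInt} (hy : y ≠ 0) :
    ∃ q : EisensteinInt, (x - y * q).norm < y.norm := by
  have hN := norm_pos hy
  obtain ⟨s, hs⟩ := exists_abs_two_mul_sub_mul_le (x * star y).re hN
  obtain ⟨t, ht⟩ := exists_abs_two_mul_sub_mul_le (x * star y).im hN
  refine ⟨⟨s, t⟩, lt_of_mul_lt_mul_right ?_ hN.le⟩
  have mul_star : (x - y * ⟨s, t⟩) * star y =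
      ⟨(x * star y).re - y.norm * s, (x * star y).im - y.norm * t⟩ := by
    rw [sub_mul, mul_right_comm, ← QuadraticAlgebra.algebraMap_norm_eq_mul_star]
    ext <;> simp
  rw [← QuadraticAlgebra.norm_star y, ← map_mul, mul_star, norm_eq, QuadraticAlgebra.norm_star]
  rw [abs_le] at hs ht
  nlinarith

lemma isCoprime_star {x y : ℤ} (hxy : IsCoprime x y) (h3 : 3 ∣ y) :
    IsCoprime (⟨x, y⟩ : EisensteinInt) (star ⟨x, y⟩) := by
  obtain ⟨k, rfl⟩ := h3
  have cop_norm : IsCoprime (x ^ 2 - x * (3 * k) + (3 * k) ^ 2) (3 * (3 * k) ^ 2) := by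
    have hx : IsCoprime (x ^ 2) (3 * k) := hxy.pow_left
    have : IsCoprime (x ^ 2 + 3 * k * (3 * k - x)) (3 * k) := hx.add_mul_left_left _
    rw [show x ^ 2 - x * (3 * k) + (3 * k) ^ 2 = x ^ 2 + 3 * k * (3 * k - x) by ring]
    exact this.of_mul_right_left.mul_right this.pow_right
  obtain ⟨m, n, hmn⟩ := cop_norm
  -- `(α - star α) ^ 2 = -3 * y ^ 2`, while `α * star α` is the norm.
  refine ⟨⟨m, 0⟩ * star ⟨x, 3 * k⟩ - ⟨n, 0⟩ * (⟨x, 3 * k⟩ - 2 * star ⟨x, 3 * k⟩),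
    -⟨n, 0⟩ * star ⟨x, 3 * k⟩, ?_⟩
  change _ = (⟨1, 0⟩ : EisensteinInt)
  ext
  · simp [two_mul]
    linear_combination hmn
  · simp [two_mul]
    ring

open Classical in
noncomputable instance : EuclideanDomain EisensteinInt where
  quotient x y := if h : y = 0 then 0 else (exists_norm_sub_mul_lt x h).choose
  quotient_zero x := dif_pos rfl
  remainder x y := if h : y = 0 then x else x - y * (exists_norm_sub_mul_lt x h).choose
  quotient_mul_add_remainder_eq x y := by
    by_cases h : y = 0 <;> simp [h]
  r x y := x.norm.natAbs < y.norm.natAbs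
  r_wellFounded := (measure fun z : EisensteinInt ↦ z.norm.natAbs).wf
  remainder_lt x y h := by
    rw [dif_neg h]
    exact Int.natAbs_lt_natAbs_of_nonneg_of_lt (norm_nonneg _)
      (exists_norm_sub_mul_lt x h).choose_spec
  mul_left_not_lt x y h := by
    rw [map_mul, not_lt, Int.natAbs_mul]
    exact Nat.le_mul_of_pos_right _ (Int.natAbs_pos.2 (norm_pos h).ne')

lemma norm_unit (u : EisensteinIntˣ) : (u : EisensteinInt).norm = 1 := by
  have h := QuadraticAlgebra.isUnit_iff_norm_isUnit.1 u.isUnit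
  have := norm_nonneg (u : EisensteinInt)
  rw [Int.isUnit_iff] at h
  lia

lemma pow_three (β : EisensteinInt) :
    β ^ 3 = ⟨β.re ^ 3 + β.im ^ 3 - 3 * β.re * β.im ^ 2, 3 * β.re * β.im * (β.re - β.im)⟩ := by
  ext <;> simp [pow_succ] <;> ring

end EisensteinInt

lemma cube_injective : Function.Injective fun x : ℤ ↦ x ^ 3 :=
  (show Odd 3 by decide).strictMono_pow.injective

open EisensteinInt in
lemma exists_unit_mul_pow_three_eq {x y v : ℤ} (hxy : IsCoprime x y) (h3 : 3 ∣ y)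
    (h : x ^ 2 - x * y + y ^ 2 = v ^ 3) :
    ∃ (β : EisensteinInt) (u : EisensteinIntˣ), β ^ 3 * u = ⟨x, y⟩ ∧ β.norm = v := by
  have mul_star : (⟨x, y⟩ : EisensteinInt) * star ⟨x, y⟩ = (v : EisensteinInt) ^ 3 := by
    rw [← QuadraticAlgebra.algebraMap_norm_eq_mul_star, norm_eq, h, map_pow]
    rfl
  obtain ⟨β, u, hu⟩ := exists_associated_pow_of_mul_eq_pow' (isCoprime_star hxy h3) mul_star
  refine ⟨β, u, hu, cube_injective ?_⟩
  have hnorm := congrArg QuadraticAlgebra.norm hu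
  rwa [map_mul, norm_unit, mul_one, map_pow, norm_eq ⟨x, y⟩, h] at hnorm

open EisensteinInt in
/-- The imaginary part of a cube vanishes modulo `3`, so the unit by which `x + y * ω` differs from
a cube is real. -/
lemma exists_eq_cube_of_norm_eq_cube {x y v : ℤ} (hxy : IsCoprime x y) (h3 : 3 ∣ y)
    (h : x ^ 2 - x * y + y ^ 2 = v ^ 3) :
    ∃ a b : ℤ, x = a ^ 3 + b ^ 3 - 3 * a * b ^ 2 ∧ y = 3 * a * b * (a - b) ∧
      v = a ^ 2 - a * b + b ^ 2 := by
  obtain ⟨⟨a, b⟩, u, hu, rfl⟩ := exists_unit_mul_pow_three_eq hxy h3 h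
  have hnorm := norm_unit u
  generalize (u : EisensteinInt) = u at hu hnorm
  obtain ⟨r, t⟩ := u
  simp only [pow_three, QuadraticAlgebra.ext_iff, QuadraticAlgebra.re_mul,
    QuadraticAlgebra.im_mul, norm_eq] at hu hnorm ⊢
  obtain ⟨rfl, rfl⟩ := hu
  have h3re : ¬ 3 ∣ a ^ 3 + b ^ 3 - 3 * a * b ^ 2 := fun hdvd ↦ by
    have := hxy.isUnit_of_dvd' (x := 3) ?_ h3
    · exact Int.prime_three.not_isUnit this
    · exact (hdvd.mul_right r).add ⟨-(a * b * (a - b) * t), by ring⟩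
  have h3t : 3 ∣ t := by
    refine (Int.prime_three.dvd_or_dvd (a := a ^ 3 + b ^ 3 - 3 * a * b ^ 2) ?_).resolve_left h3re
    obtain ⟨k, hk⟩ := h3
    exact ⟨k - a * b * (a - b) * (r - t), by linear_combination hk⟩
  have ht : t = 0 := by
    have h1 : t ≤ 1 := by nlinarith [sq_nonneg (2 * r - t)]
    have h2 : -1 ≤ t := by nlinarith [sq_nonneg (2 * r - t)]
    lia
  subst ht
  obtain rfl | rfl : r = 1 ∨ r = -1 := sq_eq_one_iff.1 (by linarith)
  · exact ⟨a, b, by ring, by ring, rfl⟩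
  · exact ⟨-a, -b, by ring, by ring, by ring⟩

lemma exists_eq_cube_of_mul_mul_add_eq {a b c u : ℤ} (hab : IsCoprime a b) (hc : c ≠ 0)
    (hdvd : c ∣ a + b) (h : a * b * (a + b) = c * u ^ 3) :
    ∃ x y w : ℤ, a = x ^ 3 ∧ b = y ^ 3 ∧ a + b = c * w ^ 3 ∧ u = x * y * w := by
  obtain ⟨d, hd⟩ := hdvd
  have had : IsCoprime a d := by
    have : IsCoprime a (a + b) := by simpa using hab.mul_add_left_right 1
    exact (hd ▸ this).of_mul_right_right
  have hbd : IsCoprime b d := by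
    have : IsCoprime b (a + b) := by simpa [add_comm] using hab.symm.mul_add_left_right 1
    exact (hd ▸ this).of_mul_right_right
  have habd : a * b * d = u ^ 3 :=
    mul_left_cancel₀ hc (by linear_combination h - a * b * hd)
  have odd_three : Odd 3 := by decide
  obtain ⟨x, rfl⟩ := Int.eq_pow_of_mul_eq_pow_odd_left (hab.mul_right had) odd_three
    ((mul_assoc a b d).symm.trans habd)
  obtain ⟨y, rfl⟩ := Int.eq_pow_of_mul_eq_pow_odd_left (b := x ^ 3 * d) (c := u)
    (hab.symm.mul_right hbd) odd_three (by linear_combination habd)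
  obtain ⟨w, rfl⟩ := Int.eq_pow_of_mul_eq_pow_odd_left (b := x ^ 3 * y ^ 3) (c := u)
    (had.symm.mul_right hbd.symm) odd_three (by linear_combination habd)
  exact ⟨x, y, w, rfl, rfl, hd, cube_injective (by linear_combination -habd)⟩

lemma tripleForm_rotate {R : Type*} [CommRing R] (a b : R) :
    tripleForm b (-(a + b)) = tripleForm a b := by
  simp only [tripleForm]
  ring

lemma tripleForm_rotate' {R : Type*} [CommRing R] (a b : R) :
    tripleForm (-(a + b)) a = tripleForm a b := by
  simp only [tripleForm]
  ring

lemma pow_dvd_or_pow_dvd_of_isCoprime {R : Type*} [CommRing R] [IsDomain R] {p a b : R}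
    (hp : Prime p) (hab : IsCoprime a b) {n : ℕ} (h : p ^ n ∣ a * b) : p ^ n ∣ a ∨ p ^ n ∣ b := by
  by_cases hpa : p ∣ a
  · have hpb : ¬ p ∣ b := fun hpb ↦ hp.not_isUnit (hab.isUnit_of_dvd' hpa hpb)
    exact .inl (hp.pow_dvd_of_dvd_mul_right n hpb h)
  · exact .inr (hp.pow_dvd_of_dvd_mul_left n hpa h)

lemma exists_tripleForm_eq_of_pow_dvd_add {a b u : ℤ} {n : ℕ} (hab : IsCoprime a b)
    (hdvd : 3 ^ n ∣ a + b) (h : a * b * (a + b) = 3 ^ n * u ^ 3) :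
    ∃ x y w : ℤ, IsCoprime x y ∧ x ^ 3 + y ^ 3 = 3 ^ n * w ^ 3 ∧
      tripleForm a b = tripleForm (x ^ 3) (y ^ 3) ∧ tripleForm b a = tripleForm (y ^ 3) (x ^ 3) ∧
      u * (a ^ 2 + a * b + b ^ 2) = x * y * w * (x ^ 6 + x ^ 3 * y ^ 3 + y ^ 6) := by
  obtain ⟨x, y, w, rfl, rfl, hw, rfl⟩ :=
    exists_eq_cube_of_mul_mul_add_eq hab (by positivity) hdvd h
  have hxy : IsCoprime x y := (IsCoprime.pow_iff three_pos three_pos).1 hab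
  exact ⟨x, y, w, hxy, hw, rfl, rfl, by ring⟩

lemma exists_tripleForm_eq_of_mul_mul_add_eq {a b u : ℤ} {n : ℕ} (hab : IsCoprime a b)
    (h : a * b * (a + b) = 3 ^ n * u ^ 3) :
    ∃ x y w : ℤ, IsCoprime x y ∧ x ^ 3 + y ^ 3 = 3 ^ n * w ^ 3 ∧
      tripleForm a b = tripleForm (x ^ 3) (y ^ 3) ∧ tripleForm b a = tripleForm (y ^ 3) (x ^ 3) ∧
      u * (a ^ 2 + a * b + b ^ 2) = x * y * w * (x ^ 6 + x ^ 3 * y ^ 3 + y ^ 6) := by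
  have ha : IsCoprime a (a + b) := by simpa using hab.mul_add_left_right 1
  have hb : IsCoprime b (a + b) := by simpa [add_comm] using hab.symm.mul_add_left_right 1
  have hdvd : 3 ^ n ∣ a * b * (a + b) := ⟨u ^ 3, h⟩
  -- The pairs `(a, b)`, `(b, c)` and `(c, a)` with `a + b + c = 0` play the same role.
  obtain hdvd | hdvd := pow_dvd_or_pow_dvd_of_isCoprime Int.prime_three (ha.mul_left hb) hdvd
  · obtain hdvd | hdvd := pow_dvd_or_pow_dvd_of_isCoprime Int.prime_three hab hdvd
    · obtain ⟨x, y, w, hxy, hw, h₁, h₂, h₃⟩ := exists_tripleForm_eq_of_pow_dvd_add (u := u)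
        hb.neg_right (by simpa using hdvd) (by linear_combination h)
      rw [tripleForm_rotate] at h₁
      rw [add_comm a b, tripleForm_rotate'] at h₂
      exact ⟨x, y, w, hxy, hw, h₁, h₂, by linear_combination h₃⟩
    · obtain ⟨x, y, w, hxy, hw, h₁, h₂, h₃⟩ := exists_tripleForm_eq_of_pow_dvd_add (u := u)
        ha.symm.neg_left (by simpa using hdvd) (by linear_combination h)
      rw [tripleForm_rotate'] at h₁
      rw [add_comm a b, tripleForm_rotate] at h₂
      exact ⟨x, y, w, hxy, hw, h₁, h₂, by linear_combination h₃⟩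
  · exact exists_tripleForm_eq_of_pow_dvd_add hab hdvd h

lemma exists_factors_of_cube_add_cube {X Y M : ℤ} (hXY : IsCoprime X Y)
    (h : X ^ 3 + Y ^ 3 = 9 * M) :
    ∃ E B : ℤ, X + Y = 3 * E ∧ X ^ 2 - 3 * X * E + 3 * E ^ 2 = B ∧ E * B = M ∧
      IsCoprime (3 * E) B := by
  have h3 : 3 ∣ X + Y := Int.prime_three.dvd_of_dvd_pow (n := 3)
    ⟨3 * M + X * Y * (X + Y), by linear_combination h⟩
  obtain ⟨E, hE⟩ := h3
  obtain rfl : Y = 3 * E - X := by linear_combination hE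
  refine ⟨E, _, hE, rfl, by linarith, ?_⟩
  have hX : IsCoprime (3 * E) X := by simpa using (hXY.add_mul_left_right 1).symm
  rw [show X ^ 2 - 3 * X * E + 3 * E ^ 2 = X ^ 2 + 3 * E * (E - X) by ring]
  exact hX.pow_right.add_mul_left_right _

lemma exists_tripleForm_of_cube_add_cube {X Y V : ℤ} {n : ℕ} (hXY : IsCoprime X Y)
    (h : X ^ 3 + Y ^ 3 = 3 ^ n * (3 * V) ^ 3) :
    ∃ a b u : ℤ, IsCoprime a b ∧ a * b * (a + b) = 3 ^ n * u ^ 3 ∧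
      X = tripleForm a b ∧ Y = tripleForm b a ∧ V = u * (a ^ 2 + a * b + b ^ 2) := by
  obtain ⟨E, B, hE, hB, hEB, hcop⟩ := exists_factors_of_cube_add_cube (M := 3 ^ (n + 1) * V ^ 3) hXY
    (h.trans (by ring))
  have hE3 : 3 ^ (n + 1) ∣ E :=
    (hcop.of_mul_left_left.pow_left (m := n + 1)).dvd_of_dvd_mul_right ⟨V ^ 3, hEB⟩
  obtain ⟨E', rfl⟩ := hE3
  have hcop' : IsCoprime E' B := hcop.of_mul_left_right.of_mul_left_right
  have hE'B : E' * B = V ^ 3 := mul_left_cancel₀ (pow_ne_zero (n + 1) three_ne_zero)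
    (by linear_combination hEB)
  have odd_three : Odd 3 := by decide
  obtain ⟨u, rfl⟩ := Int.eq_pow_of_mul_eq_pow_odd_left hcop' odd_three hE'B
  obtain ⟨v, rfl⟩ := Int.eq_pow_of_mul_eq_pow_odd_right hcop' odd_three hE'B
  have hXE : IsCoprime (X - 3 ^ (n + 1) * u ^ 3) (3 ^ (n + 1) * u ^ 3) := by
    have : IsCoprime X (3 * (3 ^ (n + 1) * u ^ 3)) := by
      simpa [add_comm Y, hE] using hXY.add_mul_left_right 1
    simpa [← sub_eq_add_neg] using this.of_mul_right_right.add_mul_left_left (-1)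
  obtain ⟨a, b, hXab, hEab, rfl⟩ := exists_eq_cube_of_norm_eq_cube hXE
    ((dvd_pow_self 3 n.succ_ne_zero).mul_right _) (v := v) (by linear_combination hB)
  obtain rfl : X = tripleForm b (-a) := by
    rw [tripleForm]
    linear_combination hXab + hEab
  obtain rfl : Y = tripleForm (-a) b := by
    simp only [tripleForm] at hE ⊢
    linear_combination hE + 3 * hEab
  refine ⟨b, -a, u, ?_, ?_, rfl, rfl, cube_injective ?_⟩
  · obtain ⟨m, n, hmn⟩ := hXY
    simp only [tripleForm] at hmn
    exact ⟨m * (b ^ 2 - 6 * b * a + 3 * a ^ 2) + n * (6 * a ^ 2 - 3 * a * b - b ^ 2),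
      m * -a ^ 2 + n * a ^ 2, by linear_combination hmn⟩
  · exact mul_left_cancel₀ (three_ne_zero (α := ℤ)) (by linear_combination -hEab)
  · linear_combination -hE'B

lemma exists_eq_tripleForm_cubes {X Y V : ℤ} {n : ℕ} (hXY : IsCoprime X Y)
    (h : X ^ 3 + Y ^ 3 = 3 ^ n * (3 * V) ^ 3) :
    ∃ x y w : ℤ, IsCoprime x y ∧ x ^ 3 + y ^ 3 = 3 ^ n * w ^ 3 ∧
      X = tripleForm (x ^ 3) (y ^ 3) ∧ Y = tripleForm (y ^ 3) (x ^ 3) ∧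
      V = x * y * w * (x ^ 6 + x ^ 3 * y ^ 3 + y ^ 6) := by
  obtain ⟨a, b, u, hab, hu, rfl, rfl, rfl⟩ := exists_tripleForm_of_cube_add_cube hXY h
  exact exists_tripleForm_eq_of_mul_mul_add_eq hab hu

/-! ### Reduction modulo a prime -/

lemma eq_zero_or_eq_or_eq_neg_of_mem_zmultiples {G : Type*} [AddGroup G] {S T : G}
    (hT : 3 • T = 0) (hS : S ∈ AddSubgroup.zmultiples T) : S = 0 ∨ S = T ∨ S = -T := by
  obtain ⟨k, rfl⟩ := hS
  have hT' : (3 : ℤ) • T = 0 := mod_cast hT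
  have hk : k • T = (k % 3) • T := by
    rw [← Int.emod_add_mul_ediv k 3, add_zsmul, mul_comm, mul_zsmul, hT', zsmul_zero, add_zero]
    simp
  have two : (2 : ℤ) • T = -T := by
    rw [eq_neg_iff_add_eq_zero, ← hT', ← add_one_zsmul]
    rfl
  have : k % 3 = 0 ∨ k % 3 = 1 ∨ k % 3 = 2 := by lia
  rcases this with h | h | h <;> simp [hk, h, two]

open AddSubgroup in
lemma sq_dvd_natCard_of_notMem_zmultiples {G : Type*} [AddCommGroup G] {p n : ℕ} [Fact p.Prime]
    {P Q : G} (hP : p ^ (n + 1) • P = 0) (hQ : p ^ (n + 1) • Q = 0) (hP' : p ^ n • P ≠ 0)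
    (hQ' : p ^ n • Q ∉ zmultiples (p ^ n • P)) : (p ^ (n + 1)) ^ 2 ∣ Nat.card G := by
  have orderP : addOrderOf P = p ^ (n + 1) := addOrderOf_eq_prime_pow hP' hP
  have hQP : p ^ n • Q ∉ zmultiples P := by
    rintro ⟨k, hk : k • P = p ^ n • Q⟩
    have hpk : (p * k) • P = 0 := by
      rw [mul_smul, hk, natCast_zsmul, ← mul_smul, ← pow_succ', hQ]
    have hdvd : (p ^ n : ℤ) ∣ k := by
      rw [← addOrderOf_dvd_iff_zsmul_eq_zero, orderP, pow_succ', Nat.cast_mul, Nat.cast_pow] at hpk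
      exact Int.dvd_of_mul_dvd_mul_left (mod_cast (Fact.out : p.Prime).ne_zero) hpk
    obtain ⟨l, rfl⟩ := hdvd
    exact hQ' ⟨l, by rw [← hk, mul_comm, mul_smul]; norm_cast⟩
  have orderQ : addOrderOf (Q : G ⧸ zmultiples P) = p ^ (n + 1) := by
    refine addOrderOf_eq_prime_pow ?_ ?_
    · rwa [← QuotientAddGroup.mk_nsmul, QuotientAddGroup.eq_zero_iff]
    · rw [← QuotientAddGroup.mk_nsmul, hQ, QuotientAddGroup.mk_zero]
  rw [card_eq_card_quotient_mul_card_addSubgroup (zmultiples P), sq, Nat.card_zmultiples, orderP]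
  exact Nat.mul_dvd_mul_right (orderQ ▸ addOrderOf_dvd_natCard _) _

lemma isCoprime_three_of_dvd_cube_add_cube {x y : ℤ} (hxy : IsCoprime x y) (h : 3 ∣ x ^ 3 + y ^ 3) :
    IsCoprime 3 (x * y * (x ^ 6 + x ^ 3 * y ^ 3 + y ^ 6)) := by
  have hx : IsCoprime (x ^ 3 + y ^ 3) x := by
    simpa [pow_succ', add_comm] using (hxy.symm.pow_left (m := 3)).add_mul_left_left (x ^ 2)
  have hy : IsCoprime (x ^ 3 + y ^ 3) y := by
    simpa [pow_succ'] using (hxy.pow_left (m := 3)).add_mul_left_left (y ^ 2)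
  have hq : IsCoprime (x ^ 3 + y ^ 3) (x ^ 6 + x ^ 3 * y ^ 3 + y ^ 6) := by
    rw [show x ^ 6 + x ^ 3 * y ^ 3 + y ^ 6 =
      -(x * y) ^ 3 + (x ^ 3 + y ^ 3) * (x ^ 3 + y ^ 3) by ring]
    exact (hx.mul_right hy).pow_right.neg_right.add_mul_left_right _
  exact ((hx.mul_right hy).mul_right hq).of_isCoprime_of_dvd_left h

@[norm_cast]
lemma intCast_tripleForm {R : Type*} [CommRing R] (a b : ℤ) :
    ((tripleForm a b : ℤ) : R) = tripleForm (a : R) b := by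
  simp only [tripleForm]
  push_cast
  rfl

section Reduction

variable {F : Type*} [Field F] {X Y W : ℤ} {ζ : F}

lemma cube_add_cube_cast (h : X ^ 3 + Y ^ 3 = 9 * W ^ 3) (hζ : ζ ^ 3 = 1) :
    (X : F) ^ 3 + Y ^ 3 = 9 * (ζ * W) ^ 3 := by
  rw [mul_pow, hζ, one_mul]
  exact_mod_cast congrArg (Int.cast (R := F)) h

section Torsion

variable [DecidableEq F]

lemma exists_pow_three_nsmul_eq_cubicPoint (h3 : (3 : F) ≠ 0) {n : ℕ} (hXY : IsCoprime X Y)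
    (h : X ^ 3 + Y ^ 3 = 9 * W ^ 3) (hW : 3 ^ n ∣ W) (hs : (X : F) + Y ≠ 0) (hζ : ζ ^ 3 = 1) :
    ∃ Q, 3 ^ n • Q = cubicPoint h3 hs (cube_add_cube_cast h hζ) := by
  induction n generalizing X Y W with
  | zero => exact ⟨_, one_nsmul _⟩
  | succ n ih =>
    rw [pow_succ'] at hW
    obtain ⟨V, rfl⟩ : 3 ∣ W := dvd_of_mul_right_dvd hW
    replace hW : 3 ^ n ∣ V := Int.dvd_of_mul_dvd_mul_left three_ne_zero hW
    obtain ⟨x, y, w, hxy, hw, rfl, rfl, rfl⟩ :=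
      exists_eq_tripleForm_cubes (n := 2) hXY (h.trans (by ring))
    have hw' : x ^ 3 + y ^ 3 = 9 * w ^ 3 := hw.trans (by ring)
    have hdvd : 3 ^ n ∣ w := by
      have hcop := isCoprime_three_of_dvd_cube_add_cube hxy ⟨3 * w ^ 3, by linear_combination hw'⟩
      exact hcop.pow_left.dvd_of_dvd_mul_left (hW.trans (dvd_of_eq (by ring)))
    have hs₀ : (x : F) + y ≠ 0 := fun h0 ↦ hs <| by
      have := cube_add_cube_cast (F := F) hw' (one_pow 3)
      push_cast
      rw [tripleForm_add_tripleForm this]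
      linear_combination -9 * (x : F) ^ 3 * y ^ 3 * this +
        9 * (x : F) ^ 3 * y ^ 3 * (x ^ 2 - x * y + y ^ 2) * h0
    obtain ⟨Q, hQ⟩ := ih hxy hw' hdvd hs₀
    refine ⟨Q, ?_⟩
    have hs' := hs
    have h' := cube_add_cube_cast (F := F) h hζ
    push_cast at hs' h'
    rw [pow_succ', mul_nsmul', hQ, three_nsmul_cubicPoint h3 hs₀ _ hs' (h'.trans (by ring))]
    simp only [cubicPoint, WeierstrassCurve.Affine.Point.some.injEq]
    push_cast
    exact ⟨by ring, rfl⟩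

lemma exists_nsmul_eq_zero_of_cast_eq_zero (h3 : (3 : F) ≠ 0) {n : ℕ} (hXY : IsCoprime X Y)
    (h : X ^ 3 + Y ^ 3 = 9 * W ^ 3) (hW : 3 ^ n ∣ W) (hX : (X : F) = 0) (hs : (X : F) + Y ≠ 0)
    (hζ : ζ ^ 3 = 1) :
    ∃ Q, 3 ^ n • Q = cubicPoint h3 hs (cube_add_cube_cast h hζ) ∧ 3 ^ (n + 1) • Q = 0 := by
  obtain ⟨Q, hQ⟩ := exists_pow_three_nsmul_eq_cubicPoint h3 hXY h hW hs hζ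
  refine ⟨Q, hQ, ?_⟩
  rw [pow_succ', mul_nsmul', hQ, three_nsmul_cubicPoint_of_eq_zero h3 hs _ hX]

lemma cubicPoint_notMem_zmultiples {x y w : F} (h3 : (3 : F) ≠ 0) (hs : x + y ≠ 0) (hx : x = 0)
    (h : x ^ 3 + y ^ 3 = 9 * w ^ 3) {w' : F} (h' : x ^ 3 + y ^ 3 = 9 * w' ^ 3) (hw : w' ≠ w) :
    cubicPoint h3 hs h' ∉ AddSubgroup.zmultiples (cubicPoint h3 hs h) := by
  have hu : 3 * w' / (x + y) ≠ 3 * w / (x + y) := by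
    rwa [Ne, div_left_inj' hs, mul_right_inj' h3]
  intro hmem
  rcases eq_zero_or_eq_or_eq_neg_of_mem_zmultiples
    (three_nsmul_cubicPoint_of_eq_zero h3 hs h hx) hmem with h0 | h1 | h2
  · exact WeierstrassCurve.Affine.Point.some_ne_zero _ h0
  · exact hu (WeierstrassCurve.Affine.Point.some.inj h1).1
  · exact hu (WeierstrassCurve.Affine.Point.some.inj h2).1

end Torsion

lemma pow_three_dvd_natCard_add_one [Finite F] (h3 : (3 : F) ≠ 0) {n : ℕ} (hXY : IsCoprime X Y)
    (h : X ^ 3 + Y ^ 3 = 9 * W ^ 3) (hW : 3 ^ n ∣ W) (hX : (X : F) = 0) (hY : (Y : F) ≠ 0)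
    (hcube : Function.Injective fun u : F ↦ u ^ 3) : 3 ^ (n + 1) ∣ Nat.card F + 1 := by
  classical
  have hs : (X : F) + Y ≠ 0 := by rwa [hX, zero_add]
  obtain ⟨Q, hQ, hQ'⟩ := exists_nsmul_eq_zero_of_cast_eq_zero h3 hXY h hW hX hs (one_pow 3)
  have orderQ : addOrderOf Q = 3 ^ (n + 1) :=
    addOrderOf_eq_prime_pow (hQ ▸ WeierstrassCurve.Affine.Point.some_ne_zero _) hQ'
  rw [← natCard_cubicCurve_point h3 (Finite.injective_iff_bijective.1 hcube), ← orderQ]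
  exact addOrderOf_dvd_natCard Q

lemma sq_pow_three_le_of_pow_three_eq_one [Finite F] (h3 : (3 : F) ≠ 0) {n : ℕ}
    (hXY : IsCoprime X Y) (h : X ^ 3 + Y ^ 3 = 9 * W ^ 3) (hW : 3 ^ n ∣ W) (hX : (X : F) = 0)
    (hY : (Y : F) ≠ 0) (hζ : ζ ^ 3 = 1) (hζ' : ζ ≠ 1) :
    (3 ^ (n + 1)) ^ 2 ≤ 2 * (Nat.card F + 1) := by
  classical
  have hs : (X : F) + Y ≠ 0 := by rwa [hX, zero_add]
  obtain ⟨P, hP, hP'⟩ := exists_nsmul_eq_zero_of_cast_eq_zero h3 hXY h hW hX hs (one_pow 3)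
  obtain ⟨Q, hQ, hQ'⟩ := exists_nsmul_eq_zero_of_cast_eq_zero h3 hXY h hW hX hs hζ
  have hW0 : (W : F) ≠ 0 := fun hW0 ↦ hY <| by
    have := cube_add_cube_cast (F := F) h (one_pow 3)
    simpa [hX, hW0] using this
  have hQP : 3 ^ n • Q ∉ AddSubgroup.zmultiples (3 ^ n • P) := by
    rw [hP, hQ]
    refine cubicPoint_notMem_zmultiples h3 hs hX _ _ ?_
    rwa [one_mul, Ne, mul_eq_right₀ hW0]
  refine (Nat.le_of_dvd Nat.card_pos ?_).trans (natCard_point_le (cubicCurve F))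
  exact sq_dvd_natCard_of_notMem_zmultiples hP' hQ'
    (hP ▸ WeierstrassCurve.Affine.Point.some_ne_zero _) hQP

lemma pow_three_dvd_or_sq_pow_three_le [Finite F] (h3 : (3 : F) ≠ 0) {n : ℕ}
    (hXY : IsCoprime X Y) (h : X ^ 3 + Y ^ 3 = 9 * W ^ 3) (hW : 3 ^ n ∣ W) (hX : (X : F) = 0) :
    3 ^ (n + 1) ∣ Nat.card F + 1 ∨ (3 ^ (n + 1)) ^ 2 ≤ 2 * (Nat.card F + 1) := by
  have hY : (Y : F) ≠ 0 := fun hY ↦ by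
    simpa [hX, hY] using hXY.map (Int.castRingHom F)
  by_cases hcube : Function.Injective fun u : F ↦ u ^ 3
  · exact .inl (pow_three_dvd_natCard_add_one h3 hXY h hW hX hY hcube)
  · obtain ⟨u, v, huv, hne⟩ := Function.not_injective_iff.1 hcube
    have hv : v ≠ 0 := by
      rintro rfl
      simp_all
    refine .inr (sq_pow_three_le_of_pow_three_eq_one (ζ := u / v) h3 hXY h hW hX hY ?_ ?_)
    · rw [div_pow, huv, div_self (pow_ne_zero 3 hv)]
    · rwa [Ne, div_eq_one_iff_eq hv]

end Reduction

lemma nine_mul_pow_le {d : ℕ} (hd : 1 ≤ d) : 9 * 3 ^ (3 * d + 1) ≤ (3 ^ (2 * d + 1)) ^ 2 := by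
  rw [← pow_mul, show 9 = 3 ^ 2 by rfl, ← pow_add]
  exact Nat.pow_le_pow_right three_pos (by lia)

lemma two_mul_prime_add_one_lt {p d : ℕ} {ε : ℤ} (hd : 1 ≤ d) (hε : ε = 1 ∨ ε = -1)
    (hdvd : (p : ℤ) ∣ 3 ^ (3 * d + 1) + ε) : 2 * (p + 1) < (3 ^ (2 * d + 1)) ^ 2 := by
  have one_lt : 1 < 3 ^ (3 * d + 1) := Nat.one_lt_pow (by lia) (by lia)
  have hle : p ≤ 3 ^ (3 * d + 1) + 1 := by
    zify at one_lt ⊢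
    linarith [Int.le_of_dvd (by lia) hdvd, show ε ≤ 1 by lia]
  linarith [nine_mul_pow_le hd]

lemma not_pow_three_dvd_prime_add_one {p d : ℕ} {ε : ℤ} (hp : p.Prime) (hd : 1 ≤ d)
    (hε : ε = 1 ∨ ε = -1) (hdvd : (p : ℤ) ∣ 3 ^ (3 * d + 1) + ε) :
    ¬ 3 ^ (2 * d + 1) ∣ p + 1 := by
  intro hq
  have hm : (9 : ℤ) * 3 ^ (3 * d + 1) ≤ (3 ^ (2 * d + 1)) ^ 2 := mod_cast nine_mul_pow_le hd
  have hq27 : (27 : ℤ) ≤ 3 ^ (2 * d + 1) :=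
    (by norm_num : (27 : ℤ) = 3 ^ 3).trans_le (pow_le_pow_right₀ (by norm_num) (by lia))
  have hqp : (3 ^ (2 * d + 1) : ℤ) ∣ p + 1 := mod_cast hq
  have hqp_le : (3 ^ (2 * d + 1) : ℤ) ≤ p + 1 := Int.le_of_dvd (by positivity) hqp
  obtain ⟨s, hs⟩ := hdvd
  have hqs : 3 ^ (2 * d + 1) ∣ s + ε := by
    have : (3 ^ (2 * d + 1) : ℤ) ∣ 3 ^ (3 * d + 1) := pow_dvd_pow 3 (by lia)
    rw [show s + ε = (p + 1) * s - 3 ^ (3 * d + 1) by linear_combination hs]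
    exact (hqp.mul_right s).sub this
  have hs0 : 0 < s := by
    have : (1 : ℤ) < 3 ^ (3 * d + 1) := one_lt_pow₀ (by norm_num) (by lia)
    exact pos_of_mul_pos_right (a := (p : ℤ)) (by lia) p.cast_nonneg
  by_cases hsε : 0 < s + ε
  · have hqs_le := Int.le_of_dvd hsε hqs
    have hmul : (3 ^ (2 * d + 1) - 1 : ℤ) * (3 ^ (2 * d + 1) - 1) ≤ p * s :=
      mul_le_mul (by linarith) (by lia) (by linarith) p.cast_nonneg
    rw [← hs] at hmul
    generalize (3 : ℤ) ^ (2 * d + 1) = q at hm hq27 hmul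
    nlinarith [show ε ≤ 1 by lia]
  · obtain ⟨rfl, rfl⟩ : s = 1 ∧ ε = -1 := by lia
    have even_p : Even p := by
      rw [← Int.even_coe_nat, ← mul_one (p : ℤ), ← hs, ← sub_eq_add_neg]
      exact ((by decide : Odd (3 : ℤ)).pow).sub_odd odd_one
    have := hp.even_iff.1 even_p
    lia

lemma not_prime_dvd_of_cube_add_cube {X Y W : ℤ} {p d : ℕ} (hp : p.Prime) (hd : 1 ≤ d)
    (hdvd : (p : ℤ) ∣ 9 ^ (3 * d + 1) - 1) (hXY : IsCoprime X Y)
    (h : X ^ 3 + Y ^ 3 = 9 * (9 ^ d * W) ^ 3) : ¬ (p : ℤ) ∣ X := by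
  intro hpX
  have := Fact.mk hp
  have h3 : ((3 : ℕ) : ZMod p) ≠ 0 := by
    rw [Ne, ZMod.natCast_eq_zero_iff, Nat.prime_dvd_prime_iff_eq hp Nat.prime_three]
    rintro rfl
    have : (3 : ℤ) ∣ 9 ^ (3 * d + 1) := dvd_pow (by norm_num) (by lia)
    lia
  have hX : (X : ZMod p) = 0 := (ZMod.intCast_zmod_eq_zero_iff_dvd X p).2 hpX
  have hW : (3 : ℤ) ^ (2 * d) ∣ 9 ^ d * W := by
    rw [pow_mul]
    exact dvd_mul_right _ _
  obtain ⟨ε, hε, hpε⟩ : ∃ ε : ℤ, (ε = 1 ∨ ε = -1) ∧ (p : ℤ) ∣ 3 ^ (3 * d + 1) + ε := by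
    have hfactor : (9 : ℤ) ^ (3 * d + 1) - 1 = (3 ^ (3 * d + 1) + 1) * (3 ^ (3 * d + 1) + -1) := by
      rw [show (9 : ℤ) = 3 ^ 2 by rfl, ← pow_mul]
      ring
    rw [hfactor] at hdvd
    rcases (Nat.prime_iff_prime_int.1 hp).dvd_or_dvd hdvd with h | h
    exacts [⟨1, .inl rfl, h⟩, ⟨-1, .inr rfl, h⟩]
  rcases pow_three_dvd_or_sq_pow_three_le (mod_cast h3) hXY h hW hX with h | h
  · rw [Nat.card_zmod] at h
    exact not_pow_three_dvd_prime_add_one hp hd hε hpε h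
  · rw [Nat.card_zmod] at h
    exact h.not_gt (two_mul_prime_add_one_lt hd hε hpε)

/-! ### Rational solutions -/

lemma three_dvd_of_cube_add_cube {X Y W : ℤ} (h : X ^ 3 + Y ^ 3 = 3 * W ^ 3) : 3 ∣ W := by
  obtain ⟨E, hE⟩ : 3 ∣ X + Y := Int.prime_three.dvd_of_dvd_pow (n := 3)
    ⟨W ^ 3 + X * Y * (X + Y), by linear_combination h⟩
  obtain rfl : Y = 3 * E - X := by linear_combination hE
  exact Int.prime_three.dvd_of_dvd_pow (n := 3) ⟨E * (X ^ 2 - 3 * X * E + 3 * E ^ 2), by linarith⟩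

lemma eq_zero_of_cube_add_cube_eq_three_mul_cube {X Y W : ℤ} (hXY : IsCoprime X Y)
    (h : X ^ 3 + Y ^ 3 = 3 * W ^ 3) : W = 0 := by
  induction hn : W.natAbs using Nat.strong_induction_on generalizing X Y W with | _ n ih
  obtain ⟨V, rfl⟩ := three_dvd_of_cube_add_cube h
  obtain ⟨x, y, w, hxy, hw, -, -, rfl⟩ :=
    exists_eq_tripleForm_cubes (n := 1) hXY (h.trans (by ring))
  by_contra hV
  have hle : w.natAbs ≤ (x * y * w * (x ^ 6 + x ^ 3 * y ^ 3 + y ^ 6)).natAbs :=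
    Int.natAbs_le_of_dvd_ne_zero ((dvd_mul_left w (x * y)).mul_right _) (right_ne_zero_of_mul hV)
  refine hV ?_
  have hw0 : w = 0 := ih w.natAbs (by lia) hxy (by rw [hw, pow_one]) rfl
  rw [hw0, mul_zero, zero_mul, mul_zero]

section CoprimeSolutions

variable {b c d : ℕ} {X Y : ℤ}

lemma dvd_nine_pow_sub_one (hXY : IsCoprime X Y)
    (h : X ^ 3 + Y ^ 3 = 9 ^ b * (9 ^ c * X + Y) ^ 3) : X ∣ 9 ^ b - 1 := by
  refine (hXY.pow_right (n := 3)).dvd_of_dvd_mul_right ⟨X ^ 2 - 9 ^ b *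
    (9 ^ c * (9 ^ c * X) ^ 2 + 3 * 9 ^ c * (9 ^ c * X) * Y + 3 * 9 ^ c * Y ^ 2), ?_⟩
  linear_combination -h

lemma exists_eq_cube_of_eq_nine_mul (hXY : IsCoprime X Y)
    (h : X ^ 3 + Y ^ 3 = 9 * (9 ^ c * X + Y) ^ 3) : ∃ x, X = x ^ 3 := by
  have hX8 : X ∣ 8 := by simpa using dvd_nine_pow_sub_one (b := 1) hXY (by simpa using h)
  by_cases h2 : 2 ∣ X
  · have hY : Odd Y := by
      rw [← Int.not_even_iff_odd, even_iff_two_dvd]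
      exact fun hY ↦ Int.prime_two.not_isUnit (hXY.isUnit_of_dvd' h2 hY)
    set K := 27 * 9 ^ c * Y ^ 2 + X * (27 * (9 ^ c) ^ 2 * Y + (9 * (9 ^ c) ^ 3 - 1) * X) with hK
    have hKodd : Odd K :=
      (((by decide : Odd (27 : ℤ)).mul (by decide : Odd (9 : ℤ)).pow).mul hY.pow).add_even
        ((even_iff_two_dvd.2 h2).mul_right _)
    have h8 : 8 ∣ X := by
      have hcop : IsCoprime 8 K := by
        rw [show (8 : ℤ) = 2 ^ 3 by rfl]
        exact (Int.isCoprime_two_left.2 hKodd).pow_left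
      exact hcop.dvd_of_dvd_mul_right ⟨-Y ^ 3, by rw [hK]; linear_combination -h⟩
    rcases Int.associated_iff.1 (associated_of_dvd_dvd hX8 h8) with rfl | rfl
    exacts [⟨2, rfl⟩, ⟨-2, rfl⟩]
  · have hcop : IsCoprime (2 ^ 3) X := (Int.isCoprime_two_left.2 (by
      rwa [← Int.not_even_iff_odd, even_iff_two_dvd])).pow_left
    rcases Int.isUnit_iff.1 (hcop.isUnit_of_dvd' hX8 dvd_rfl) with rfl | rfl
    exacts [⟨1, rfl⟩, ⟨-1, rfl⟩]

lemma isUnit_of_eq_pow_mul (hd : 1 ≤ d) (hXY : IsCoprime X Y)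
    (h : X ^ 3 + Y ^ 3 = 9 ^ (3 * d + 1) * (9 ^ c * X + Y) ^ 3) : IsUnit X := by
  rw [Int.isUnit_iff_natAbs_eq]
  by_contra hX
  obtain ⟨p, hp, hpX⟩ := Nat.exists_prime_and_dvd hX
  rw [← Int.natCast_dvd] at hpX
  exact not_prime_dvd_of_cube_add_cube (W := 9 ^ c * X + Y) hp hd
    (hpX.trans (dvd_nine_pow_sub_one hXY h)) hXY (by rw [h]; ring) hpX

lemma exists_eq_cube_of_eq_pow_mul (hXY : IsCoprime X Y)
    (h : X ^ 3 + Y ^ 3 = 9 ^ (3 * d + 1) * (9 ^ c * X + Y) ^ 3) : ∃ x, X = x ^ 3 := by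
  rcases Nat.eq_zero_or_pos d with rfl | hd
  · exact exists_eq_cube_of_eq_nine_mul hXY (by simpa using h)
  · rcases Int.isUnit_iff.1 (isUnit_of_eq_pow_mul hd hXY h) with rfl | rfl
    exacts [⟨1, rfl⟩, ⟨-1, rfl⟩]

-- `E ^ 3 - (E - X) ^ 3 = X * (X ^ 2 - 3 * X * E + 3 * E ^ 2)`, and both factors are cubes.
lemma eq_of_cube_add_cube_eq_nine_mul {x Y W : ℤ} (hXY : IsCoprime (x ^ 3) Y) (hx : x ≠ 0)
    (hW : W ≠ 0) (h : (x ^ 3) ^ 3 + Y ^ 3 = 9 * W ^ 3) : Y = 2 * x ^ 3 := by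
  obtain ⟨E, B, hE, hB, hEB, hcop⟩ := exists_factors_of_cube_add_cube hXY h
  obtain ⟨v, rfl⟩ :=
    Int.eq_pow_of_mul_eq_pow_odd_right hcop.of_mul_left_right (by decide : Odd 3) hEB
  have hEv : E * v ^ 3 ≠ 0 := hEB ▸ pow_ne_zero 3 hW
  have hE0 : E ≠ 0 := left_ne_zero_of_mul hEv
  have hv : v ≠ 0 := (pow_ne_zero_iff three_ne_zero).1 (right_ne_zero_of_mul hEv)
  by_contra hY
  have hEX : E - x ^ 3 ≠ 0 := by lia
  exact fermatLastTheoremFor_iff_int.1 fermatLastTheoremThree (E - x ^ 3) (x * v) E hEX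
    (mul_ne_zero hx hv) hE0 (by linear_combination -x ^ 3 * hB)

lemma not_eq_pow_three_mul_add_one_mul (hXY : IsCoprime X Y) (hX : X ≠ 0)
    (hW : 9 ^ c * X + Y ≠ 0) : X ^ 3 + Y ^ 3 ≠ 9 ^ (3 * d + 1) * (9 ^ c * X + Y) ^ 3 := by
  intro h
  obtain ⟨x, rfl⟩ := exists_eq_cube_of_eq_pow_mul hXY h
  obtain rfl : Y = 2 * x ^ 3 := eq_of_cube_add_cube_eq_nine_mul hXY
    (by simpa using hX) (W := 9 ^ d * (9 ^ c * x ^ 3 + Y)) (mul_ne_zero (by positivity) hW)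
    (by rw [h]; ring)
  have hpow : (9 : ℤ) ^ (3 * d + 1) = 9 * (9 ^ d) ^ 3 := by ring
  have hcube : ((9 : ℤ) ^ d * (9 ^ c + 2)) ^ 3 = 1 :=
    mul_right_cancel₀ (pow_ne_zero 3 hX) (by rw [hpow] at h; linarith)
  have one_le_d : (1 : ℤ) ≤ 9 ^ d := one_le_pow₀ (by norm_num)
  have one_le_c : (1 : ℤ) ≤ 9 ^ c := one_le_pow₀ (by norm_num)
  have : (1 : ℤ) < 9 ^ d * (9 ^ c + 2) := by nlinarith
  exact (one_lt_pow₀ this three_ne_zero).ne' hcube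

lemma not_eq_pow_mul_of_isCoprime (hb : 1 ≤ b) (hc : 1 ≤ c) (hXY : IsCoprime X Y) :
    X ^ 3 + Y ^ 3 ≠ 9 ^ b * (9 ^ c * X + Y) ^ 3 := by
  intro h
  have one_lt_b : (1 : ℤ) < 9 ^ b := one_lt_pow₀ (by norm_num) (by lia)
  have one_lt_c : (1 : ℤ) < 9 ^ c := one_lt_pow₀ (by norm_num) (by lia)
  have hX : X ≠ 0 := by
    rintro rfl
    linarith [zero_dvd_iff.1 (dvd_nine_pow_sub_one hXY h)]
  have hY : Y ≠ 0 := by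
    rintro rfl
    have : (9 : ℤ) ^ b * (9 ^ c) ^ 3 = 1 :=
      mul_right_cancel₀ (pow_ne_zero 3 hX) (by linear_combination -h)
    nlinarith [one_lt_pow₀ one_lt_c three_ne_zero]
  have hW : 9 ^ c * X + Y ≠ 0 := fun hW ↦ by
    obtain rfl : Y = -X :=
      cube_injective (by linear_combination h + 9 ^ b * (9 ^ c * X + Y) ^ 2 * hW)
    have : (9 : ℤ) ^ c = 1 := mul_right_cancel₀ hX (by linear_combination hW)
    linarith
  obtain ⟨d, rfl | rfl | rfl⟩ : ∃ d, b = 3 * d ∨ b = 3 * d + 1 ∨ b = 3 * d + 2 := ⟨b / 3, by lia⟩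
  · exact fermatLastTheoremFor_iff_int.1 fermatLastTheoremThree X Y (9 ^ d * (9 ^ c * X + Y))
      hX hY (mul_ne_zero (by positivity) hW) (h.trans (by ring))
  · exact not_eq_pow_three_mul_add_one_mul hXY hX hW h
  · exact mul_ne_zero (a := 3 * 9 ^ d) (by positivity) hW
      (eq_zero_of_cube_add_cube_eq_three_mul_cube hXY (h.trans (by ring)))

end CoprimeSolutions

section RationalSolutions

variable {a b c : ℕ}

lemma eq_zero_of_cube_add_cube_eq_pow_mul (hb : 1 ≤ b) (hc : 1 ≤ c) {X Y : ℤ}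
    (h : X ^ 3 + Y ^ 3 = 9 ^ b * (9 ^ c * X + Y) ^ 3) : X = 0 ∧ Y = 0 := by
  by_contra hne
  have hgcd : 0 < Int.gcd X Y := Int.gcd_pos_iff.2 (by tauto)
  obtain ⟨X', Y', hcop, hX, hY⟩ := Int.exists_gcd_one hgcd
  have hg : (Int.gcd X Y : ℤ) ≠ 0 := by positivity
  generalize (Int.gcd X Y : ℤ) = g at hX hY hg
  subst hX hY
  exact not_eq_pow_mul_of_isCoprime hb hc (Int.isCoprime_iff_gcd_eq_one.2 hcop)
    (mul_right_cancel₀ (pow_ne_zero 3 hg) (by linear_combination h))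

lemma eq_zero_of_cube_add_cube_eq_pow_mul_rat (hb : 1 ≤ b) (hc : 1 ≤ c) {x y : ℚ}
    (h : x ^ 3 + y ^ 3 = 9 ^ b * (9 ^ c * x + y) ^ 3) : x = 0 ∧ y = 0 := by
  have hX : (x.num : ℚ) = x * x.den := (Rat.mul_den_eq_num x).symm
  have hY : (y.num : ℚ) = y * y.den := (Rat.mul_den_eq_num y).symm
  have hcleared : (x.num * y.den) ^ 3 + (y.num * x.den) ^ 3 =
      9 ^ b * (9 ^ c * (x.num * y.den) + y.num * x.den) ^ 3 := by
    qify
    rw [hX, hY]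
    linear_combination (x.den * y.den : ℚ) ^ 3 * h
  simpa using eq_zero_of_cube_add_cube_eq_pow_mul hb hc hcleared

lemma padicValRat_three_pow_mul (a : ℕ) {x : ℚ} (hx : x ≠ 0) :
    padicValRat 3 (3 ^ a * x) = a + padicValRat 3 x := by
  have : Fact (Nat.Prime 3) := ⟨Nat.prime_three⟩
  have hself : padicValRat 3 (3 : ℚ) = 1 := mod_cast padicValRat.self (p := 3) (by norm_num)
  rw [padicValRat.mul (by positivity) hx, padicValRat.pow, hself, mul_one]

lemma mod_three_eq_of_pow_mul_cube_add_eq (ha : 1 ≤ a) (hb : 1 ≤ b) {x y : ℚ}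
    (hx : x ≠ 0) (hy : y ≠ 0)
    (h : 3 ^ a * x ^ 3 + 3 ^ b * y ^ 3 = (3 ^ a * x + 3 ^ b * y) ^ 3) : a % 3 = b % 3 := by
  have : Fact (Nat.Prime 3) := ⟨Nat.prime_three⟩
  by_contra hab
  have hval (n : ℕ) {z : ℚ} (hz : z ≠ 0) :
      padicValRat 3 (3 ^ n * z ^ 3) = n + 3 * padicValRat 3 z := by
    rw [padicValRat_three_pow_mul n (pow_ne_zero 3 hz), padicValRat.pow, Nat.cast_ofNat]
  have hne : padicValRat 3 (3 ^ a * x ^ 3) ≠ padicValRat 3 (3 ^ b * y ^ 3) := by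
    rw [hval a hx, hval b hy]
    lia
  have hsum : 3 ^ a * x ^ 3 + 3 ^ b * y ^ 3 ≠ 0 := fun h0 ↦
    hne (by rw [eq_neg_of_add_eq_zero_left h0, padicValRat.neg])
  have hlin : 3 ^ a * x + 3 ^ b * y ≠ 0 := by
    rw [h] at hsum
    exact (pow_ne_zero_iff three_ne_zero).1 hsum
  have hmin := padicValRat.add_eq_min hsum (by positivity) (by positivity) hne
  have hle := padicValRat.min_le_padicValRat_add (p := 3) hlin
  rw [h, padicValRat.pow, hval a hx, hval b hy, Nat.cast_ofNat] at hmin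
  rw [padicValRat_three_pow_mul a hx, padicValRat_three_pow_mul b hy] at hle
  lia

lemma eq_zero_of_pow_mul_cube_eq (ha : 1 ≤ a) {x : ℚ} (h : 3 ^ a * x ^ 3 = (3 ^ a * x) ^ 3) :
    x = 0 := by
  by_contra hx
  have hsq : ((3 : ℚ) ^ a) ^ 2 = 1 :=
    mul_right_cancel₀ (b := 3 ^ a * x ^ 3) (by positivity) (by linear_combination -h)
  exact (one_lt_pow₀ (one_lt_pow₀ (by norm_num : (1 : ℚ) < 3) (by lia)) two_ne_zero).ne' hsq

lemma eq_zero_of_pow_mul_cube_add_eq (hb : 1 ≤ b) (hab : b < a) {x y : ℚ}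
    (h : 3 ^ a * x ^ 3 + 3 ^ b * y ^ 3 = (3 ^ a * x + 3 ^ b * y) ^ 3) : x = 0 ∧ y = 0 := by
  rcases eq_or_ne x 0 with rfl | hx
  · exact ⟨rfl, eq_zero_of_pow_mul_cube_eq hb (by simpa using h)⟩
  rcases eq_or_ne y 0 with rfl | hy
  · exact ⟨eq_zero_of_pow_mul_cube_eq (hb.trans hab.le) (by simpa using h), rfl⟩
  obtain ⟨c, rfl⟩ : ∃ c, a = b + 3 * c :=
    ⟨(a - b) / 3, by have := mod_three_eq_of_pow_mul_cube_add_eq (by lia) hb hx hy h; lia⟩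
  have hnine (n : ℕ) : (9 : ℚ) ^ n = (3 ^ n) ^ 2 := by rw [pow_right_comm]; norm_num
  refine absurd (eq_zero_of_cube_add_cube_eq_pow_mul_rat hb (by lia : 1 ≤ c)
    (x := 3 ^ c * x) (y := y) (mul_left_cancel₀ (a := 3 ^ b) (by positivity) ?_)).2 hy
  rw [hnine, hnine]
  rw [pow_add, pow_mul'] at h
  linear_combination h

lemma eq_zero_of_sum_pow_three_mul_eq_zero {k₁ k₂ k₃ : ℕ} (h₁ : k₂ < k₁) (h₂ : k₃ < k₂)
    {x y z : ℚ} (hlin : 3 ^ k₁ * x + 3 ^ k₂ * y + 3 ^ k₃ * z = 0)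
    (hcube : 3 ^ k₁ * x ^ 3 + 3 ^ k₂ * y ^ 3 + 3 ^ k₃ * z ^ 3 = 0) : x = 0 ∧ y = 0 ∧ z = 0 := by
  obtain ⟨b, rfl⟩ := Nat.exists_eq_add_of_lt h₂
  obtain ⟨a, rfl⟩ := Nat.exists_eq_add_of_lt h₁
  have h3 : (3 : ℚ) ^ k₃ ≠ 0 := by positivity
  obtain rfl : z = -(3 ^ (b + 1 + a + 1) * x + 3 ^ (b + 1) * y) :=
    mul_left_cancel₀ h3 (by linear_combination hlin)
  obtain ⟨rfl, rfl⟩ : x = 0 ∧ y = 0 :=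
    eq_zero_of_pow_mul_cube_add_eq (a := b + 1 + a + 1) (b := b + 1) (by lia) (by lia)
      (mul_left_cancel₀ h3 (by linear_combination hcube))
  simp

end RationalSolutions

/-! ### Traces of quotients of polynomial rings -/

open Polynomial

section Trace

variable {R S : Type*} [CommRing R] [CommRing S]

/-- The trace of the class of `a` in the free `R`-algebra `R[X]/(P)`, for `P` monic, as a linear
functional of `a`. It is defined by Euler's formula as the coefficient of `X ^ (deg P - 1)` in the
remainder of `a * P'` modulo `P`, which makes sense over every commutative ring and turns products
of the `P` into sums. -/
noncomputable def traceMod (P : R[X]) : R[X] →ₗ[R] R :=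
  lcoeff R (P.natDegree - 1) ∘ₗ modByMonicHom P ∘ₗ LinearMap.mulRight R (derivative P)

lemma traceMod_apply (P a : R[X]) :
    traceMod P a = ((a * derivative P) %ₘ P).coeff (P.natDegree - 1) := rfl

lemma traceMod_C_mul (P : R[X]) (c : R) (a : R[X]) : traceMod P (C c * a) = c * traceMod P a := by
  rw [← smul_eq_C_mul, map_smul, smul_eq_mul]

lemma traceMod_congr {P a b : R[X]} (hP : P.Monic) (h : P ∣ a - b) :
    traceMod P a = traceMod P b := by
  rw [← sub_eq_zero, ← map_sub, traceMod_apply,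
    (modByMonic_eq_zero_iff_dvd hP).2 (h.mul_right _), coeff_zero]

lemma traceMod_map (φ : R →+* S) {P : R[X]} (hP : P.Monic) (a : R[X]) :
    traceMod (P.map φ) (a.map φ) = φ (traceMod P a) := by
  nontriviality S
  rw [traceMod_apply, traceMod_apply, hP.natDegree_map, derivative_map, ← Polynomial.map_mul,
    ← map_modByMonic _ hP, coeff_map]

lemma mul_modByMonic_mul {f g : R[X]} (hf : f.Monic) (hg : g.Monic) (b : R[X]) :
    (b * g) %ₘ (f * g) = (b %ₘ f) * g := by
  nontriviality R
  refine (div_modByMonic_unique (b /ₘ f) _ (hf.mul hg) ⟨?_, ?_⟩).2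
  · linear_combination g * modByMonic_add_div b f
  · rw [hg.degree_mul, hg.degree_mul]
    exact WithBot.add_lt_add_right (degree_ne_bot.2 hg.ne_zero) (degree_modByMonic_lt b hf)

lemma coeff_mul_modByMonic_mul {f g : R[X]} (hf : f.Monic) (hg : g.Monic)
    (hdeg : f.natDegree ≠ 0) (b : R[X]) :
    ((b * g) %ₘ (f * g)).coeff ((f * g).natDegree - 1) = (b %ₘ f).coeff (f.natDegree - 1) := by
  have hlt := natDegree_modByMonic_lt b hf (by rintro rfl; simp at hdeg)
  rw [mul_modByMonic_mul hf hg, hf.natDegree_mul hg, Nat.sub_add_comm (by lia),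
    coeff_mul_add_eq_of_natDegree_le (by lia) le_rfl, hg.coeff_natDegree, mul_one]

lemma traceMod_one (a : R[X]) : traceMod 1 a = 0 := by
  rw [traceMod_apply, derivative_one, mul_zero, zero_modByMonic, coeff_zero]

lemma traceMod_mul {f g : R[X]} (hf : f.Monic) (hg : g.Monic) (a : R[X]) :
    traceMod (f * g) a = traceMod f a + traceMod g a := by
  by_cases hf0 : f.natDegree = 0
  · rw [hf.natDegree_eq_zero.1 hf0, one_mul, traceMod_one, zero_add]
  by_cases hg0 : g.natDegree = 0
  · rw [hg.natDegree_eq_zero.1 hg0, mul_one, traceMod_one, add_zero]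
  rw [traceMod_apply, traceMod_apply, traceMod_apply, ← coeff_mul_modByMonic_mul hf hg hf0,
    ← coeff_mul_modByMonic_mul hg hf hg0, mul_comm g f, ← coeff_add, ← add_modByMonic,
    derivative_mul]
  congr 2
  ring

lemma traceMod_multiset_prod {ι : Type*} (s : Multiset ι) {f : ι → R[X]}
    (hf : ∀ i ∈ s, (f i).Monic) (a : R[X]) :
    traceMod (s.map f).prod a = (s.map fun i ↦ traceMod (f i) a).sum := by
  induction s using Multiset.induction_on with
  | empty => exact traceMod_one a
  | cons i s ih =>
    rw [Multiset.forall_mem_cons] at hf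
    rw [Multiset.map_cons, Multiset.prod_cons,
      traceMod_mul hf.1 (monic_multiset_prod_of_monic s f hf.2), Multiset.map_cons,
      Multiset.sum_cons, ih hf.2]

lemma traceMod_X_sub_C (c : R) (a : R[X]) : traceMod (X - C c) a = a.eval c := by
  nontriviality R
  simp [traceMod_apply, modByMonic_X_sub_C_eq_C_eval]

lemma traceMod_prod {ι : Type*} (s : Finset ι) {f : ι → R[X]} (hf : ∀ i ∈ s, (f i).Monic)
    (a : R[X]) : traceMod (∏ i ∈ s, f i) a = ∑ i ∈ s, traceMod (f i) a :=
  traceMod_multiset_prod s.val hf a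

lemma traceMod_pow {f : R[X]} (hf : f.Monic) (n : ℕ) (a : R[X]) :
    traceMod (f ^ n) a = n * traceMod f a := by
  simpa using traceMod_prod (Finset.range n) (fun _ _ ↦ hf) a

variable {F : Type*} [Field F] {P : F[X]}

lemma algebraMap_traceMod_eq_sum_aroots (hP : P.Monic) (a : F[X]) :
    algebraMap F (AlgebraicClosure F) (traceMod P a) =
      ((P.aroots (AlgebraicClosure F)).map fun c ↦ aeval c a).sum := by
  have hsplits := IsAlgClosed.splits (P.map (algebraMap F (AlgebraicClosure F)))
  rw [← traceMod_map _ hP, hsplits.eq_prod_roots_of_monic (hP.map _),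
    traceMod_multiset_prod _ fun c _ ↦ monic_X_sub_C c]
  simp only [traceMod_X_sub_C, eval_map_algebraMap, aroots_def]

lemma trace_mk_eq_traceMod [CharZero F] (hP : P.Monic) [hirr : Fact (Irreducible P)] (a : F[X]) :
    Algebra.trace F (AdjoinRoot P) (AdjoinRoot.mk P a) = traceMod P a := by
  classical
  let pb := AdjoinRoot.powerBasis hP.ne_zero
  have : FiniteDimensional F (AdjoinRoot P) := pb.finite
  have hmin : minpoly F pb.gen = P := AdjoinRoot.minpoly_powerBasis_gen_of_monic hP
  let eval (y : AlgebraicClosure F) := aeval y a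
  apply (algebraMap F (AlgebraicClosure F)).injective
  rw [trace_eq_sum_embeddings, algebraMap_traceMod_eq_sum_aroots hP,
    Fintype.sum_equiv pb.liftEquiv' (fun σ ↦ σ (AdjoinRoot.mk P a)) (fun y ↦ eval y),
    Finset.sum_mem_multiset (f := fun y ↦ eval y) (g := eval) _ fun _ ↦ rfl,
    Finset.sum_eq_multiset_sum, Multiset.toFinset_val, Multiset.dedup_eq_self.2, hmin]
  · rw [hmin]
    exact nodup_roots ((separable_map _).2 hirr.out.separable)
  · intro σ
    rw [← AdjoinRoot.aeval_eq, ← aeval_algHom_apply]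
    rfl

end Trace

/-! ### Descent along a parameter -/

section Descent

variable {R : Type*} [CommRing R] {F H : R[X][X]}

/-- Reduction modulo the inner variable `s` of `R[s][X]`, which is written `C X` in `R[X][X]`. -/
noncomputable def specialize : R[X][X] →+* R[X] := mapRingHom (evalRingHom 0)

lemma specialize_map_C (a : R[X]) : specialize (a.map C) = a := by
  have : (evalRingHom (0 : R)).comp C = RingHom.id R := by ext; simp
  rw [specialize, coe_mapRingHom, Polynomial.map_map, this, Polynomial.map_id]

lemma C_X_dvd_of_specialize_eq_zero (h : specialize H = 0) : C X ∣ H := by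
  refine C_dvd_iff_dvd_coeff _ _ |>.2 fun i ↦ X_dvd_iff.2 ?_
  simpa [specialize, coeff_zero_eq_eval_zero] using congrArg (coeff · i) h

lemma exists_dvd_sub_of_specialize_dvd (h : specialize F ∣ specialize H) :
    ∃ H', F ∣ H - C X * H' := by
  obtain ⟨q, hq⟩ := h
  obtain ⟨H', hH'⟩ : C X ∣ H - F * q.map C := C_X_dvd_of_specialize_eq_zero <| by
    rw [map_sub, map_mul, hq, specialize_map_C, sub_self]
  exact ⟨H', q.map C, by linear_combination hH'⟩

lemma eval_zero_traceMod (hF : F.Monic) (H : R[X][X]) :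
    (traceMod F H).eval 0 = traceMod (specialize F) (specialize H) :=
  (traceMod_map (evalRingHom 0) hF H).symm

lemma traceMod_pow_eq_X_pow_mul (hF : F.Monic) {H' : R[X][X]} (h : F ∣ H - C X * H') (n : ℕ) :
    traceMod F (H ^ n) = X ^ n * traceMod F (H' ^ n) := by
  rw [← traceMod_C_mul, C_pow, ← mul_pow]
  exact traceMod_congr hF (h.trans (sub_dvd_pow_sub_pow _ _ n))

lemma dvd_of_forall_exists_dvd_sub_C_X_pow_mul (hF : F.Monic)
    (h : ∀ n, ∃ H', F ∣ H - C X ^ n * H') : F ∣ H := by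
  rw [← modByMonic_eq_zero_iff_dvd hF]
  ext i j
  obtain ⟨H', hH'⟩ := h (j + 1)
  rw [← modByMonic_eq_zero_iff_dvd hF, sub_modByMonic, sub_eq_zero, ← C_pow, ← smul_eq_C_mul,
    smul_modByMonic] at hH'
  rw [hH', coeff_smul, smul_eq_mul, coeff_X_pow_mul', if_neg (by lia), coeff_zero, coeff_zero]

lemma dvd_of_descent {α : Type*} (hF : F.Monic) {S : α → Prop} {p : α → R[X][X]}
    (hS : ∀ a, S a → ∃ a', S a' ∧ F ∣ p a - C X * p a') {a : α} (ha : S a) : F ∣ p a := by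
  refine dvd_of_forall_exists_dvd_sub_C_X_pow_mul hF fun n ↦ ?_
  suffices ∃ a', S a' ∧ F ∣ p a - C X ^ n * p a' from this.imp' p fun _ h ↦ h.2
  induction n with
  | zero => exact ⟨a, ha, by simp⟩
  | succ n ih =>
    obtain ⟨b, hb, hab⟩ := ih
    obtain ⟨c, hc, hbc⟩ := hS b hb
    refine ⟨c, hc, ?_⟩
    have hstep : p a - C X ^ (n + 1) * p c =
        (p a - C X ^ n * p b) + C X ^ n * (p b - C X * p c) := by ring
    exact hstep ▸ hab.add (hbc.mul_left _)

end Descent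

section GenericFiber

variable {K : Type*} [Field K] {Q : K[X]}

/-- The polynomial `Q(X) - s` over `K[s]`, whose quotient is `K[X]` seen as an algebra over
`K[s] = K[Q]`. -/
noncomputable def genericFiber (Q : K[X]) : K[X][X] := Q.map C - C X

lemma specialize_genericFiber (Q : K[X]) : specialize (genericFiber Q) = Q := by
  rw [genericFiber, map_sub, specialize_map_C, specialize, coe_mapRingHom, map_C, coe_evalRingHom,
    eval_X, C_0, sub_zero]

lemma swap_genericFiber (Q : K[X]) : Bivariate.swap (genericFiber Q) = -(X - C Q) := by
  rw [genericFiber, map_sub, Bivariate.swap_map_C, Bivariate.swap_X, neg_sub]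

lemma genericFiber_dvd_iff (H : K[X][X]) :
    genericFiber Q ∣ H ↔ (Bivariate.swap H).eval Q = 0 := by
  rw [← map_dvd_iff Bivariate.swap, swap_genericFiber]
  exact neg_dvd.trans dvd_iff_isRoot

lemma prime_genericFiber (Q : K[X]) : Prime (genericFiber Q) := by
  rw [← MulEquiv.prime_iff (Bivariate.swap : K[X][X] ≃ₐ[K] K[X][X]), swap_genericFiber]
  exact (prime_X_sub_C Q).neg

lemma natDegree_genericFiber (Q : K[X]) : (genericFiber Q).natDegree = Q.natDegree := by
  rw [genericFiber, natDegree_sub_C, natDegree_map_eq_of_injective C_injective]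

lemma monic_genericFiber (hQ : Q.Monic) (hdeg : 0 < Q.natDegree) : (genericFiber Q).Monic :=
  (hQ.map C).sub_of_left <| degree_lt_degree <| by
    rwa [natDegree_C, natDegree_map_eq_of_injective C_injective]

lemma irreducible_map_genericFiber (hQ : Q.Monic) (hdeg : 0 < Q.natDegree) :
    Irreducible ((genericFiber Q).map (algebraMap K[X] (RatFunc K))) :=
  (monic_genericFiber hQ hdeg).irreducible_iff_irreducible_map_fraction_map.1
    (prime_genericFiber Q).irreducible

lemma isCoprime_map_genericFiber (hQ : Q.Monic) (hdeg : 0 < Q.natDegree) {g : K[X]}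
    (hg : g.Monic) :
    IsCoprime ((genericFiber Q).map (algebraMap K[X] (RatFunc K)))
      ((g.map C).map (algebraMap K[X] (RatFunc K))) := by
  rw [(irreducible_map_genericFiber hQ hdeg).coprime_iff_not_dvd,
    (hg.map C).dvd_iff_fraction_map_dvd_fraction_map (monic_genericFiber hQ hdeg),
    genericFiber_dvd_iff, Bivariate.swap_map_C, eval_C]
  exact hg.ne_zero

end GenericFiber

section Anisotropic

variable {R ι : Type*} [CommRing R] [Fintype ι]

/-- The cubic form `a ↦ Tr (a ^ 3)` on `R[X]/(P)` has no nontrivial zero. -/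
def CubeAnisotropic (P : R[X]) : Prop :=
  ∀ a : R[X], traceMod P (a ^ 3) = 0 → P ∣ a

/-- The forms `∑ i, w i * Tr (a i)` and `∑ i, w i * Tr (a i ^ 3)` on the product of the algebras
`R[X]/(P i)` have no nontrivial common zero. -/
def JointlyAnisotropic (w : ι → ℕ) (P : ι → R[X]) : Prop :=
  ∀ a : ι → R[X], ∑ i, (w i : R) * traceMod (P i) (a i) = 0 →
    ∑ i, (w i : R) * traceMod (P i) (a i ^ 3) = 0 → ∀ i, P i ∣ a i

section FractionField

variable {L : Type*} [Field L] [Algebra R L] [IsFractionRing R L]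

attribute [local instance] Polynomial.algebra Polynomial.isLocalization in
lemma exists_map_eq_C_mul {κ : Type*} [Finite κ] (x : κ → L[X]) :
    ∃ d : R, algebraMap R L d ≠ 0 ∧ ∃ H : κ → R[X], ∀ i,
      (H i).map (algebraMap R L) = C (algebraMap R L d) * x i := by
  obtain ⟨⟨c, hc⟩, h⟩ :=
    IsLocalization.exist_integer_multiples_of_finite ((nonZeroDivisors R).map (C (R := R))) x
  obtain ⟨d, hd, rfl⟩ := Submonoid.mem_map.1 hc
  choose H hH using h
  refine ⟨d, IsUnit.ne_zero (IsLocalization.map_units L ⟨d, hd⟩), H, fun i ↦ ?_⟩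
  rw [← coe_mapRingHom, ← algebraMap_def, hH, Algebra.smul_def, algebraMap_def, coe_mapRingHom,
    map_C]

lemma CubeAnisotropic.map {P : R[X]} (h : CubeAnisotropic P) (hP : P.Monic) :
    CubeAnisotropic (P.map (algebraMap R L)) := by
  intro x hx
  obtain ⟨d, hd, H, hH⟩ := exists_map_eq_C_mul (R := R) fun _ : Unit ↦ x
  rw [← dvd_C_mul hd, ← hH ()]
  refine Polynomial.map_dvd _ (h _ ?_)
  apply IsFractionRing.injective R L
  rw [← traceMod_map _ hP, Polynomial.map_pow, hH, mul_pow, ← C_pow, traceMod_C_mul, hx, mul_zero,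
    map_zero]

lemma JointlyAnisotropic.map {w : ι → ℕ} {P : ι → R[X]} (h : JointlyAnisotropic w P)
    (hP : ∀ i, (P i).Monic) : JointlyAnisotropic w fun i ↦ (P i).map (algebraMap R L) := by
  intro x hlin hcube i
  obtain ⟨d, hd, H, hH⟩ := exists_map_eq_C_mul (R := R) x
  have hsum (n : ℕ) (hx : ∑ i, (w i : L) * traceMod ((P i).map (algebraMap R L)) (x i ^ n) = 0) :
      ∑ i, (w i : R) * traceMod (P i) (H i ^ n) = 0 := by
    apply IsFractionRing.injective R L
    calc algebraMap R L (∑ i, (w i : R) * traceMod (P i) (H i ^ n))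
      _ = ∑ i, algebraMap R L d ^ n *
            ((w i : L) * traceMod ((P i).map (algebraMap R L)) (x i ^ n)) := by
          rw [map_sum]
          refine Finset.sum_congr rfl fun i _ ↦ ?_
          rw [map_mul, map_natCast, ← traceMod_map _ (hP i), Polynomial.map_pow, hH, mul_pow,
            ← C_pow, traceMod_C_mul, mul_left_comm]
      _ = algebraMap R L 0 := by rw [← Finset.mul_sum, hx, mul_zero, map_zero]
  rw [← dvd_C_mul hd, ← hH i]
  exact Polynomial.map_dvd _ <| h H (by simpa using hsum 1 (by simpa using hlin)) (hsum 3 hcube) i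

end FractionField

end Anisotropic

section Deformation

section DivisibleOfTraceCube

variable {R : Type*} [CommRing R] {F : R[X][X]}

/-- In `R[s][X]/(F)`, an element `H` with `s ^ 3 ∣ Tr (H ^ 3)` is itself divisible by `s`. This is
the form of anisotropy on which the `s`-adic descent runs. -/
def DivisibleOfTraceCube (F : R[X][X]) : Prop :=
  ∀ H : R[X][X], X ^ 3 ∣ traceMod F (H ^ 3) → ∃ H', F ∣ H - C X * H'

lemma DivisibleOfTraceCube.cubeAnisotropic (h : DivisibleOfTraceCube F) (hF : F.Monic) :
    CubeAnisotropic F := fun H hH ↦ by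
  refine dvd_of_descent hF (S := fun H ↦ traceMod F (H ^ 3) = 0) (p := id) (fun H hH ↦ ?_) hH
  obtain ⟨H', hH'⟩ := h H (hH ▸ dvd_zero _)
  refine ⟨H', (isRegular_X_pow 3).left.mul_left_eq_zero_iff.1 ?_, hH'⟩
  rw [← traceMod_pow_eq_X_pow_mul hF hH', hH]

lemma traceMod_specialize_pow_eq_zero (hF : F.Monic) {H : R[X][X]} {n : ℕ}
    (h : X ∣ traceMod F (H ^ n)) : traceMod (specialize F) (specialize H ^ n) = 0 := by
  rw [← map_pow, ← eval_zero_traceMod hF, ← coeff_zero_eq_eval_zero, X_dvd_iff.1 h]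

lemma CubeAnisotropic.divisibleOfTraceCube (h : CubeAnisotropic (specialize F)) (hF : F.Monic) :
    DivisibleOfTraceCube F := fun _ hH ↦
  exists_dvd_sub_of_specialize_dvd <| h _ <|
    traceMod_specialize_pow_eq_zero hF ((dvd_pow_self X three_ne_zero).trans hH)

end DivisibleOfTraceCube

section JointDescent

variable {R ι : Type*} [CommRing R] [Fintype ι] {w : ι → ℕ} {F : ι → R[X][X]}

lemma sum_mul_traceMod_pow_eq_X_pow_mul (hF : ∀ j, (F j).Monic) {H H' : ι → R[X][X]}
    (h : ∀ j, F j ∣ H j - C X * H' j) (n : ℕ) :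
    ∑ j, (w j : R[X]) * traceMod (F j) (H j ^ n) =
      X ^ n * ∑ j, (w j : R[X]) * traceMod (F j) (H' j ^ n) := by
  rw [Finset.mul_sum]
  refine Finset.sum_congr rfl fun j _ ↦ ?_
  rw [traceMod_pow_eq_X_pow_mul (hF j) (h j), mul_left_comm]

lemma jointlyAnisotropic_of_forall_exists_dvd_sub (hF : ∀ j, (F j).Monic)
    (h : ∀ H : ι → R[X][X], ∑ j, (w j : R[X]) * traceMod (F j) (H j) = 0 →
      ∑ j, (w j : R[X]) * traceMod (F j) (H j ^ 3) = 0 → ∀ j, ∃ H', F j ∣ H j - C X * H') :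
    JointlyAnisotropic w F := by
  intro H hlin hcube i
  refine dvd_of_descent (hF i) (a := H) (p := fun H ↦ H i)
    (S := fun H : ι → R[X][X] ↦ ∑ j, (w j : R[X]) * traceMod (F j) (H j) = 0 ∧
      ∑ j, (w j : R[X]) * traceMod (F j) (H j ^ 3) = 0) ?_ ⟨hlin, hcube⟩
  rintro G ⟨hlin, hcube⟩
  choose G' hG' using h G hlin hcube
  have hdescend (n : ℕ) (hn : ∑ j, (w j : R[X]) * traceMod (F j) (G j ^ n) = 0) :
      ∑ j, (w j : R[X]) * traceMod (F j) (G' j ^ n) = 0 :=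
    (isRegular_X_pow n).left.mul_left_eq_zero_iff.1
      ((sum_mul_traceMod_pow_eq_X_pow_mul hF hG' n).symm.trans hn)
  exact ⟨G', ⟨by simpa using hdescend 1 (by simpa using hlin), hdescend 3 hcube⟩, hG' i⟩

end JointDescent

section CubeRoot

variable {K : Type*} [Field K]

lemma map_C_pow_eq_genericFiber_add (f : K[X]) (n : ℕ) :
    f.map C ^ n = genericFiber (f ^ n) + C X := by
  rw [genericFiber, Polynomial.map_pow, sub_add_cancel]

variable [CharZero K]

/-- Modulo `f ^ 3 - s`, the polynomial `f` is a cube root of `s`. -/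
lemma CubeAnisotropic.exists_dvd_sub_map_C_mul {f : K[X]} (h : CubeAnisotropic f) (hf : f.Monic)
    (hdeg : 0 < f.natDegree) {H : K[X][X]} (hH : X ∣ traceMod (genericFiber (f ^ 3)) (H ^ 3)) :
    ∃ H', genericFiber (f ^ 3) ∣ H - f.map C * H' ∧
      traceMod (genericFiber (f ^ 3)) (H ^ 3) = X * traceMod (genericFiber (f ^ 3)) (H' ^ 3) := by
  have hF : (genericFiber (f ^ 3)).Monic :=
    monic_genericFiber (hf.pow 3) (by rw [natDegree_pow]; positivity)
  have hroot := map_C_pow_eq_genericFiber_add f 3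
  obtain ⟨q, hq⟩ : f ∣ specialize H := h _ <| by
    have htrace := traceMod_specialize_pow_eq_zero hF hH
    rw [specialize_genericFiber, traceMod_pow hf] at htrace
    simpa using htrace
  obtain ⟨G, hG⟩ : C X ∣ H - f.map C * q.map C := C_X_dvd_of_specialize_eq_zero <| by
    rw [map_sub, map_mul, hq, specialize_map_C, specialize_map_C, sub_self]
  have hdvd : genericFiber (f ^ 3) ∣ H - f.map C * (q.map C + f.map C ^ 2 * G) :=
    ⟨-G, by linear_combination hG - G * hroot⟩
  refine ⟨_, hdvd, ?_⟩
  rw [← traceMod_C_mul]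
  refine (traceMod_congr hF (hdvd.trans (sub_dvd_pow_sub_pow _ _ 3))).trans
    (traceMod_congr hF ?_)
  rw [mul_pow, ← sub_mul, hroot, add_sub_cancel_right]
  exact dvd_mul_right _ _

lemma CubeAnisotropic.divisibleOfTraceCube_genericFiber_pow {f : K[X]} (h : CubeAnisotropic f)
    (hf : f.Monic) (hdeg : 0 < f.natDegree) : DivisibleOfTraceCube (genericFiber (f ^ 3)) := by
  intro H hH
  have hX : (X : K[X]) ≠ 0 := X_ne_zero
  obtain ⟨H₁, ⟨d₁, hd₁⟩, htrace₁⟩ :=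
    h.exists_dvd_sub_map_C_mul hf hdeg ((dvd_pow_self X three_ne_zero).trans hH)
  rw [htrace₁, pow_succ', mul_dvd_mul_iff_left hX] at hH
  obtain ⟨H₂, ⟨d₂, hd₂⟩, htrace₂⟩ :=
    h.exists_dvd_sub_map_C_mul hf hdeg ((dvd_pow_self X two_ne_zero).trans hH)
  rw [htrace₂, sq, mul_dvd_mul_iff_left hX] at hH
  obtain ⟨H₃, ⟨d₃, hd₃⟩, -⟩ := h.exists_dvd_sub_map_C_mul hf hdeg hH
  exact ⟨H₃, d₁ + f.map C * d₂ + f.map C ^ 2 * d₃ + H₃, by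
    linear_combination hd₁ + f.map C * hd₂ + f.map C ^ 2 * hd₃ +
      H₃ * map_C_pow_eq_genericFiber_add f 3⟩

end CubeRoot

section CubeRootDeformation

variable {K ι : Type*} [Field K] [DecidableEq ι] {i₀ : ι} {f : ι → K[X]}

/-- The family over `K[s]` obtained from `f` by adjoining a cube root of `s` to the algebra
`K[X]/(f i₀)`: the polynomial `f i₀` becomes `f i₀ ^ 3 - s`, the others are unchanged. -/
noncomputable def cubeRootDeformation (i₀ : ι) (f : ι → K[X]) : ι → K[X][X] :=
  Function.update (fun j ↦ (f j).map C) i₀ (genericFiber (f i₀ ^ 3))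

lemma cubeRootDeformation_self (i₀ : ι) (f : ι → K[X]) :
    cubeRootDeformation i₀ f i₀ = genericFiber (f i₀ ^ 3) := Function.update_self ..

lemma cubeRootDeformation_of_ne (f : ι → K[X]) {j : ι} (hj : j ≠ i₀) :
    cubeRootDeformation i₀ f j = (f j).map C := Function.update_of_ne hj ..

lemma specialize_cubeRootDeformation (i₀ : ι) (f : ι → K[X]) (j : ι) :
    specialize (cubeRootDeformation i₀ f j) = f j ^ (Pi.mulSingle i₀ 3 : ι → ℕ) j := by
  obtain rfl | hj := eq_or_ne j i₀
  · rw [cubeRootDeformation_self, specialize_genericFiber, Pi.mulSingle_eq_same]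
  · rw [cubeRootDeformation_of_ne f hj, specialize_map_C, Pi.mulSingle_eq_of_ne hj, pow_one]

lemma natDegree_cubeRootDeformation (i₀ : ι) (f : ι → K[X]) (j : ι) :
    (cubeRootDeformation i₀ f j).natDegree = (Pi.mulSingle i₀ 3 : ι → ℕ) j * (f j).natDegree := by
  obtain rfl | hj := eq_or_ne j i₀
  · rw [cubeRootDeformation_self, natDegree_genericFiber, Pi.mulSingle_eq_same, natDegree_pow]
  · rw [cubeRootDeformation_of_ne f hj, natDegree_map_eq_of_injective C_injective,
      Pi.mulSingle_eq_of_ne hj, one_mul]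

lemma monic_cubeRootDeformation (hf : ∀ j, (f j).Monic) (hdeg : 0 < (f i₀).natDegree) (j : ι) :
    (cubeRootDeformation i₀ f j).Monic := by
  obtain rfl | hj := eq_or_ne j i₀
  · rw [cubeRootDeformation_self]
    exact monic_genericFiber ((hf j).pow 3) (by rw [natDegree_pow]; positivity)
  · rw [cubeRootDeformation_of_ne f hj]
    exact (hf j).map C

lemma pairwise_isCoprime_map_cubeRootDeformation (hf : ∀ j, (f j).Monic)
    (hdeg : 0 < (f i₀).natDegree) (hcop : Pairwise fun i j ↦ IsCoprime (f i) (f j)) :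
    Pairwise fun i j ↦ IsCoprime
      ((cubeRootDeformation i₀ f i).map (algebraMap K[X] (RatFunc K)))
      ((cubeRootDeformation i₀ f j).map (algebraMap K[X] (RatFunc K))) := by
  have hcop₀ {j : ι} (hj : j ≠ i₀) : IsCoprime
      ((cubeRootDeformation i₀ f i₀).map (algebraMap K[X] (RatFunc K)))
      ((cubeRootDeformation i₀ f j).map (algebraMap K[X] (RatFunc K))) := by
    rw [cubeRootDeformation_self, cubeRootDeformation_of_ne f hj]
    exact isCoprime_map_genericFiber ((hf i₀).pow 3) (by rw [natDegree_pow]; positivity) (hf j)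
  intro i j hij
  obtain rfl | hi := eq_or_ne i i₀
  · exact hcop₀ hij.symm
  obtain rfl | hj := eq_or_ne j i₀
  · exact (hcop₀ hi).symm
  rw [cubeRootDeformation_of_ne f hi, cubeRootDeformation_of_ne f hj]
  simpa only [coe_mapRingHom] using
    ((hcop hij).map (mapRingHom C)).map (mapRingHom (algebraMap K[X] (RatFunc K)))

lemma divisibleOfTraceCube_cubeRootDeformation [CharZero K] (hf : ∀ j, (f j).Monic)
    (hdeg : 0 < (f i₀).natDegree) (hcube : ∀ j, CubeAnisotropic (f j)) (j : ι) :
    DivisibleOfTraceCube (cubeRootDeformation i₀ f j) := by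
  obtain rfl | hj := eq_or_ne j i₀
  · rw [cubeRootDeformation_self]
    exact (hcube j).divisibleOfTraceCube_genericFiber_pow (hf j) hdeg
  · refine CubeAnisotropic.divisibleOfTraceCube ?_ (monic_cubeRootDeformation hf hdeg j)
    rw [cubeRootDeformation_of_ne f hj, specialize_map_C]
    exact hcube j

variable [Fintype ι] {w : ι → ℕ}

lemma JointlyAnisotropic.dvd_specialize
    (h : JointlyAnisotropic (Pi.mulSingle i₀ 3 * w) f) (hf : ∀ j, (f j).Monic)
    (hdeg : 0 < (f i₀).natDegree) {H : ι → K[X][X]}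
    (hlin : ∑ j, (w j : K[X]) * traceMod (cubeRootDeformation i₀ f j) (H j) = 0)
    (hcube : ∑ j, (w j : K[X]) * traceMod (cubeRootDeformation i₀ f j) (H j ^ 3) = 0) (j : ι) :
    f j ∣ specialize (H j) := by
  have hsum (G : ι → K[X][X])
      (hG : ∑ j, (w j : K[X]) * traceMod (cubeRootDeformation i₀ f j) (G j) = 0) :
      ∑ j, ((Pi.mulSingle i₀ 3 * w : ι → ℕ) j : K) * traceMod (f j) (specialize (G j)) = 0 := by
    calc ∑ j, ((Pi.mulSingle i₀ 3 * w : ι → ℕ) j : K) * traceMod (f j) (specialize (G j))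
      _ = (∑ j, (w j : K[X]) * traceMod (cubeRootDeformation i₀ f j) (G j)).eval 0 := by
        rw [eval_finsetSum]
        refine Finset.sum_congr rfl fun j _ ↦ ?_
        rw [eval_mul, eval_natCast, eval_zero_traceMod (monic_cubeRootDeformation hf hdeg j),
          specialize_cubeRootDeformation, traceMod_pow (hf j), Pi.mul_apply, Nat.cast_mul]
        ring
      _ = 0 := by rw [hG, eval_zero]
  exact h (fun j ↦ specialize (H j)) (hsum H hlin) (by simpa using hsum _ hcube) j

variable [CharZero K]

lemma JointlyAnisotropic.exists_dvd_sub_C_X_mul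
    (h : JointlyAnisotropic (Pi.mulSingle i₀ 3 * w) f) (hf : ∀ j, (f j).Monic)
    (hdeg : 0 < (f i₀).natDegree) (haniso : ∀ j, CubeAnisotropic (f j)) (hw : w i₀ ≠ 0)
    {H : ι → K[X][X]}
    (hlin : ∑ j, (w j : K[X]) * traceMod (cubeRootDeformation i₀ f j) (H j) = 0)
    (hcube : ∑ j, (w j : K[X]) * traceMod (cubeRootDeformation i₀ f j) (H j ^ 3) = 0) (j : ι) :
    ∃ H', cubeRootDeformation i₀ f j ∣ H j - C X * H' := by
  have hne {j : ι} (hj : j ≠ i₀) : ∃ H', cubeRootDeformation i₀ f j ∣ H j - C X * H' := by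
    refine exists_dvd_sub_of_specialize_dvd ?_
    rw [cubeRootDeformation_of_ne f hj, specialize_map_C]
    exact h.dvd_specialize hf hdeg hlin hcube j
  obtain rfl | hj := eq_or_ne j i₀
  · refine divisibleOfTraceCube_cubeRootDeformation hf hdeg haniso j _ ?_
    have hunit : IsUnit (w j : K[X]) := by
      rw [← map_natCast C]
      exact (IsUnit.mk0 _ (Nat.cast_ne_zero.2 hw)).map C
    rw [← hunit.dvd_mul_left, eq_neg_of_add_eq_zero_left
      ((Finset.add_sum_erase _ _ (Finset.mem_univ j)).trans hcube)]
    refine (dvd_neg.2 (Finset.dvd_sum fun l hl ↦ ?_))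
    obtain ⟨H', hH'⟩ := hne (Finset.ne_of_mem_erase hl)
    rw [traceMod_pow_eq_X_pow_mul (monic_cubeRootDeformation hf hdeg l) hH']
    exact (dvd_mul_right _ _).mul_left _
  · exact hne hj

lemma jointlyAnisotropic_cubeRootDeformation
    (h : JointlyAnisotropic (Pi.mulSingle i₀ 3 * w) f) (hf : ∀ j, (f j).Monic)
    (hdeg : 0 < (f i₀).natDegree) (haniso : ∀ j, CubeAnisotropic (f j)) (hw : w i₀ ≠ 0) :
    JointlyAnisotropic w (cubeRootDeformation i₀ f) :=
  jointlyAnisotropic_of_forall_exists_dvd_sub (monic_cubeRootDeformation hf hdeg)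
    fun _ ↦ h.exists_dvd_sub_C_X_mul hf hdeg haniso hw

end CubeRootDeformation

end Deformation

/-! ### Anisotropic families of étale algebras -/

section AnisotropicFamily

variable {K ι : Type*} [Field K] [Fintype ι] {w : ι → ℕ} {f : ι → K[X]}

/-- Pairwise coprime monic polynomials `f i` such that the cube trace form is anisotropic on each
`K[X]/(f i)` and the `w`-weighted trace and cube trace forms have no nontrivial common zero on
`∏ i, K[X]/(f i)`. -/
structure IsAnisotropicFamily (w : ι → ℕ) (f : ι → K[X]) : Prop where
  weight_ne_zero : ∀ i, w i ≠ 0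
  monic : ∀ i, (f i).Monic
  natDegree_pos : ∀ i, 0 < (f i).natDegree
  pairwise_isCoprime : Pairwise fun i j ↦ IsCoprime (f i) (f j)
  cubeAnisotropic : ∀ i, CubeAnisotropic (f i)
  jointlyAnisotropic : JointlyAnisotropic w f

lemma IsAnisotropicFamily.map_cubeRootDeformation [DecidableEq ι] [CharZero K] {i₀ : ι}
    (h : IsAnisotropicFamily (Pi.mulSingle i₀ 3 * w) f) :
    IsAnisotropicFamily w fun i ↦
      (cubeRootDeformation i₀ f i).map (algebraMap K[X] (RatFunc K)) := by
  have hw (i : ι) : w i ≠ 0 := right_ne_zero_of_mul (h.weight_ne_zero i)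
  have hmonic := monic_cubeRootDeformation h.monic (h.natDegree_pos i₀)
  exact {
    weight_ne_zero := hw
    monic i := (hmonic i).map _
    natDegree_pos i := by
      rw [(hmonic i).natDegree_map, natDegree_cubeRootDeformation]
      exact Nat.pos_of_ne_zero
        (mul_ne_zero (left_ne_zero_of_mul (h.weight_ne_zero i)) (h.natDegree_pos i).ne')
    pairwise_isCoprime := pairwise_isCoprime_map_cubeRootDeformation h.monic (h.natDegree_pos i₀)
      h.pairwise_isCoprime
    cubeAnisotropic i := ((divisibleOfTraceCube_cubeRootDeformation h.monic (h.natDegree_pos i₀)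
      h.cubeAnisotropic i).cubeAnisotropic (hmonic i)).map (hmonic i)
    jointlyAnisotropic := (jointlyAnisotropic_cubeRootDeformation h.jointlyAnisotropic h.monic
      (h.natDegree_pos i₀) h.cubeAnisotropic (hw i₀)).map hmonic }

lemma isAnisotropicFamily_X_sub_C {c : ι → K} (hc : Function.Injective c) (hw : ∀ i, w i ≠ 0)
    (h : ∀ x : ι → K, ∑ i, (w i : K) * x i = 0 → ∑ i, (w i : K) * x i ^ 3 = 0 → x = 0) :
    IsAnisotropicFamily w fun i ↦ X - C (c i) where
  weight_ne_zero := hw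
  monic i := monic_X_sub_C _
  natDegree_pos i := by simp
  pairwise_isCoprime := pairwise_coprime_X_sub_C hc
  cubeAnisotropic i a ha := by
    rw [traceMod_X_sub_C, eval_pow] at ha
    exact dvd_iff_isRoot.2 (pow_eq_zero_iff three_ne_zero |>.1 ha)
  jointlyAnisotropic a hlin hcube i := by
    simp only [traceMod_X_sub_C, eval_pow] at hlin hcube
    exact dvd_iff_isRoot.2 (congrFun (h _ hlin hcube) i)

/-- Over some field of characteristic zero there is an anisotropic family with weights `w` and
degrees `n`. -/
def HasAnisotropicFamily (w n : ι → ℕ) : Prop :=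
  ∃ (K : Type) (_ : Field K) (_ : CharZero K) (f : ι → K[X]),
    IsAnisotropicFamily w f ∧ ∀ i, (f i).natDegree = n i

lemma HasAnisotropicFamily.mulSingle_three [DecidableEq ι] {i₀ : ι} {n : ι → ℕ}
    (h : HasAnisotropicFamily (Pi.mulSingle i₀ 3 * w) n) :
    HasAnisotropicFamily w (Pi.mulSingle i₀ 3 * n) := by
  obtain ⟨K, _, _, f, hf, hn⟩ := h
  refine ⟨RatFunc K, inferInstance, charZero_of_injective_algebraMap (algebraMap K _).injective,
    _, hf.map_cubeRootDeformation, fun i ↦ ?_⟩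
  rw [natDegree_map_eq_of_injective (IsFractionRing.injective K[X] (RatFunc K)),
    natDegree_cubeRootDeformation, hn, Pi.mul_apply]

lemma HasAnisotropicFamily.pow_three {k n : ι → ℕ}
    (h : HasAnisotropicFamily ((fun i ↦ 3 ^ k i) * w) n) :
    HasAnisotropicFamily w ((fun i ↦ 3 ^ k i) * n) := by
  classical
  let transferable : Submonoid (ι → ℕ) :=
    { carrier := {v | ∀ w n, HasAnisotropicFamily (v * w) n → HasAnisotropicFamily w (v * n)}
      one_mem' w n h := by simpa using h
      mul_mem' {u v} hu hv w n h := by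
        rw [mul_comm u v, mul_assoc]
        exact hv _ _ (hu _ _ (mul_assoc u v w ▸ h)) }
  have hmem (i : ι) : Pi.mulSingle i 3 ∈ transferable := fun _ _ ↦ mulSingle_three
  suffices (fun i ↦ 3 ^ k i) ∈ transferable from this w n h
  rw [← Finset.univ_prod_mulSingle fun i ↦ 3 ^ k i]
  refine prod_mem fun i _ ↦ ?_
  rw [Pi.mulSingle_pow]
  exact pow_mem (hmem i) _

lemma hasAnisotropicFamily_one (hw : ∀ i, w i ≠ 0)
    (h : ∀ x : ι → ℚ, ∑ i, (w i : ℚ) * x i = 0 → ∑ i, (w i : ℚ) * x i ^ 3 = 0 → x = 0) :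
    HasAnisotropicFamily w 1 := by
  obtain ⟨c, hc⟩ := Countable.exists_injective_nat ι
  exact ⟨ℚ, inferInstance, inferInstance, _,
    isAnisotropicFamily_X_sub_C (Nat.cast_injective.comp hc) hw h, fun i ↦ natDegree_X_sub_C _⟩

end AnisotropicFamily

section HermiteFails

/-- The Hermite–Joubert problem has a negative answer in degree `n`. -/
def HermiteFails (n : ℕ) : Prop :=
  ∃ (F E : Type) (_ : Field F) (_ : Field E) (_ : Algebra F E),
    CharZero F ∧ Module.finrank F E = n ∧
      ∀ δ : E, δ ≠ 0 → ¬ (Algebra.trace F E δ = 0 ∧ Algebra.trace F E (δ ^ 3) = 0)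

lemma hermiteFails_of_irreducible {F : Type} [Field F] [CharZero F] {P : F[X]} (hP : P.Monic)
    (hirr : Irreducible P) (h : JointlyAnisotropic (1 : Unit → ℕ) fun _ ↦ P) :
    HermiteFails P.natDegree := by
  have : Fact (Irreducible P) := ⟨hirr⟩
  refine ⟨F, AdjoinRoot P, inferInstance, inferInstance, inferInstance, inferInstance, ?_, ?_⟩
  · rw [(AdjoinRoot.powerBasis hP.ne_zero).finrank, AdjoinRoot.powerBasis_dim]
  · rintro δ hδ ⟨htrace, htrace_cube⟩
    obtain ⟨a, rfl⟩ := AdjoinRoot.mk_surjective δ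
    rw [trace_mk_eq_traceMod hP] at htrace
    rw [← map_pow, trace_mk_eq_traceMod hP] at htrace_cube
    exact hδ (AdjoinRoot.mk_eq_zero.2
      (h (fun _ ↦ a) (by simpa using htrace) (by simpa using htrace_cube) ()))

variable {ι : Type*} [Fintype ι]

lemma IsAnisotropicFamily.jointlyAnisotropic_genericFiber_prod {K : Type*} [Field K]
    {f : ι → K[X]} (h : IsAnisotropicFamily 1 f) (hdeg : 0 < (∏ i, f i).natDegree) :
    JointlyAnisotropic (1 : Unit → ℕ) fun _ ↦ genericFiber (∏ i, f i) := by
  have hF := monic_genericFiber (monic_prod_of_monic _ _ fun i _ ↦ h.monic i) hdeg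
  refine jointlyAnisotropic_of_forall_exists_dvd_sub (fun _ ↦ hF) fun H hlin hcube j ↦
    exists_dvd_sub_of_specialize_dvd ?_
  simp only [Pi.one_apply, Nat.cast_one, one_mul, Fintype.sum_unique, Subsingleton.elim default j]
    at hlin hcube
  have htrace {G : K[X][X]} (hG : traceMod (genericFiber (∏ i, f i)) G = 0) :
      ∑ i, traceMod (f i) (specialize G) = 0 := by
    have heval := eval_zero_traceMod hF G
    rw [hG, eval_zero, specialize_genericFiber, traceMod_prod _ fun i _ ↦ h.monic i] at heval
    exact heval.symm
  rw [specialize_genericFiber]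
  refine Finset.prod_dvd_of_coprime (fun i _ j _ hij ↦ h.pairwise_isCoprime hij) fun i _ ↦ ?_
  refine h.jointlyAnisotropic (fun _ ↦ specialize (H j)) ?_ ?_ i
  · simpa only [Pi.one_apply, Nat.cast_one, one_mul] using htrace hlin
  · simpa only [Pi.one_apply, Nat.cast_one, one_mul, map_pow] using htrace hcube

lemma HasAnisotropicFamily.hermiteFails [Nonempty ι] {n : ι → ℕ}
    (h : HasAnisotropicFamily 1 n) : HermiteFails (∑ i, n i) := by
  obtain ⟨K, _, _, f, hf, hn⟩ := h
  have hmonic : (∏ i, f i).Monic := monic_prod_of_monic _ _ fun i _ ↦ hf.monic i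
  have hnatDegree : (∏ i, f i).natDegree = ∑ i, n i := by
    simp only [natDegree_prod_of_monic _ _ fun i _ ↦ hf.monic i, hn]
  have hdeg : 0 < (∏ i, f i).natDegree := by
    rw [hnatDegree]
    exact Finset.sum_pos (fun i _ ↦ hn i ▸ hf.natDegree_pos i) Finset.univ_nonempty
  have hF := monic_genericFiber hmonic hdeg
  have : CharZero (RatFunc K) := charZero_of_injective_algebraMap (algebraMap K _).injective
  rw [← hnatDegree, ← natDegree_genericFiber, ← hF.natDegree_map (algebraMap K[X] (RatFunc K))]
  exact hermiteFails_of_irreducible (hF.map _) (irreducible_map_genericFiber hmonic hdeg)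
    ((hf.jointlyAnisotropic_genericFiber_prod hdeg).map fun _ ↦ hF)

theorem hermiteFails_sum_pow_three [Nonempty ι] (k : ι → ℕ)
    (h : ∀ x : ι → ℚ, ∑ i, 3 ^ k i * x i = 0 → ∑ i, 3 ^ k i * x i ^ 3 = 0 → x = 0) :
    HermiteFails (∑ i, 3 ^ k i) := by
  have hstart : HasAnisotropicFamily (fun i ↦ 3 ^ k i) 1 :=
    hasAnisotropicFamily_one (fun i ↦ by positivity) (by simpa using h)
  have hend : HasAnisotropicFamily 1 ((fun i ↦ 3 ^ k i) * 1) :=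
    HasAnisotropicFamily.pow_three (by simpa using hstart)
  simpa using hend.hermiteFails

end HermiteFails

/-- **Theorem 1 (Brassil–Reichstein conjecture, Hermite theorem fails).**
For every integer `n = 3^k₁ + 3^k₂ + 3^k₃` with `k₁ > k₂ > k₃ ≥ 0`, there exist fields
`F ⊆ E` of characteristic `0` with `[E : F] = n` such that no nonzero `δ ∈ E` satisfies
`Tr_{E/F}(δ) = Tr_{E/F}(δ³) = 0`. -/
theorem hermite_fails_three_powers_of_three (k₁ k₂ k₃ : ℕ) (h₁ : k₁ > k₂) (h₂ : k₂ > k₃) :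
    ∃ (F E : Type) (_ : Field F) (_ : Field E) (_ : Algebra F E),
      CharZero F ∧
      Module.finrank F E = 3 ^ k₁ + 3 ^ k₂ + 3 ^ k₃ ∧
      ∀ δ : E, δ ≠ 0 →
        ¬ (Algebra.trace F E δ = 0 ∧ Algebra.trace F E (δ ^ 3) = 0) := by
  have h := hermiteFails_sum_pow_three ![k₁, k₂, k₃] fun x hlin hcube ↦ by
    simp only [Fin.sum_univ_three, Matrix.cons_val] at hlin hcube
    obtain ⟨hx₀, hx₁, hx₂⟩ := eq_zero_of_sum_pow_three_mul_eq_zero h₁ h₂ hlin hcube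
    ext i
    fin_cases i <;> assumption
  simp only [Fin.sum_univ_three, Matrix.cons_val] at h
  exact h
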